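/- arXiv:2301.09260 — 4 statements merged into one kernel-verified Lean document; each statement's English description precedes it below -/
import Mathlib

section
/- For every partition λ = (λ_1 ≥ λ_2 ≥ … ≥ λ_ℓ ≥ 0) of positive integers and every n ≥ 1, the polynomial det[h_{λ_i − i + j}]_{i,j=1}^{ℓ}, where h_r is the r-th complete homogeneous symmetric polynomial in a_1, …, a_n, has nonnegative coefficients as a polynomial in a_1, …, a_n (indeed it equals the Schur polynomial S_λ(a_1,…,a_n)). -/
open MvPolynomial

/-!
The Jacobi–Trudi matrix is a submatrix of the infinite upper triangular Toeplitz matrix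
`T(h) = (h_{c - r})_{r, c ∈ ℕ}`, with rows `C + i - λ_i` and columns `C + j`, both strictly
increasing (`C` is any bound for the parts). Hence it is enough that every minor of `T(h)` has
nonnegative coefficients, and this is proved by adding the variables one at a time.

With no variables `T(h)` is the identity matrix, whose minors are `0` or `1`. If `h'` arises from
`h` by adjoining a variable `a`, then `h'_{r+1} = h_{r+1} + a h'_r`, so column `c + 1` of `T(h')` is
column `c + 1` of `T(h)` plus `a` times column `c` of `T(h')`. Thus `T(h')` is reached from `T(h)` by
successive operations of adding `a` times a column to the next one, and by multilinearity of the
determinant each of these turns a minor into `D + a D'`, where `D` and `D'` are previous minors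
(or `D' = 0`); see `TotallyIn.step`.
-/

/-- The `r`-th complete homogeneous symmetric polynomial in `a_1, …, a_n`:
`h_r = Σ_{1 ≤ i_1 ≤ ⋯ ≤ i_r ≤ n} a_{i_1} ⋯ a_{i_r}`. -/
noncomputable def hpoly (n r : ℕ) : MvPolynomial (Fin n) ℝ :=
  ∑ s : Sym (Fin n) r, ((s : Multiset (Fin n)).map X).prod

/-- `h_r` for an integer index `r`, with `h_r = 0` for `r < 0`. -/
noncomputable def hInt (n : ℕ) (r : ℤ) : MvPolynomial (Fin n) ℝ :=
  if 0 ≤ r then hpoly n r.toNat else 0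

/-- Every minor of the `ℕ × ℕ` matrix `M` lies in the subsemiring `N`. This is total nonnegativity
when `N` is a cone of nonnegative elements. -/
def TotallyIn {R : Type*} [CommRing R] (N : Subsemiring R) (M : ℕ → ℕ → R) : Prop :=
  ∀ (ℓ : ℕ) (r g : Fin ℓ → ℕ), StrictMono r → StrictMono g →
    Matrix.det (Matrix.of fun i j => M (r i) (g j)) ∈ N

/-- Adding `a` times column `k` to column `k + 1` changes a minor using column `k + 1` by `a` times
the minor with column `k` in its place, which vanishes if column `k` was already used. -/
theorem TotallyIn.step {R : Type*} [CommRing R] {N : Subsemiring R} {A B : ℕ → ℕ → R} {a : R}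
    (ha : a ∈ N) (k : ℕ) (hA : TotallyIn N A) (hne : ∀ i c, c ≠ k + 1 → B i c = A i c)
    (heq : ∀ i, B i (k + 1) = A i (k + 1) + a * A i k) : TotallyIn N B := by
  intro ℓ r g hr hg
  by_cases hk : ∃ p, g p = k + 1
  · obtain ⟨p, hp⟩ := hk
    have h1 : (Matrix.of fun i j => B (r i) (g j)) =
        (Matrix.of fun i j => A (r i) (g j)).updateCol p
          ((fun i => A (r i) (g p)) + a • fun i => A (r i) k) := by
      ext i j
      by_cases hj : j = p
      · subst hj
        simp [hp, heq]
      · have : g j ≠ k + 1 := fun h => hj (hg.injective (h.trans hp.symm))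
        simp [hj, hne _ _ this]
    have h2 : (Matrix.of fun i j => A (r i) (g j)).updateCol p (fun i => A (r i) (g p)) =
        Matrix.of fun i j => A (r i) (g j) := by
      ext i j
      by_cases hj : j = p
      · subst hj
        simp
      · simp [hj]
    have h3 : (Matrix.of fun i j => A (r i) (g j)).updateCol p (fun i => A (r i) k) =
        Matrix.of fun i j => A (r i) (Function.update g p k j) := by
      ext i j
      by_cases hj : j = p
      · subst hj
        simp
      · simp [hj]
    rw [h1, Matrix.det_updateCol_add, Matrix.det_updateCol_smul, h2, h3]
    refine N.add_mem (hA _ _ _ hr hg) (N.mul_mem ha ?_)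
    by_cases hq : ∃ q, g q = k
    · obtain ⟨q, hq⟩ := hq
      have hqp : q ≠ p := by
        rintro rfl
        omega
      rw [Matrix.det_zero_of_column_eq hqp]
      · exact N.zero_mem
      · intro i
        simp [hqp, hq]
    · push Not at hq
      refine hA _ _ _ hr fun i j hij => ?_
      have h := hg hij
      have hi := hq i
      rcases eq_or_ne i p with rfl | hip
      · simp only [Function.update_self, Function.update_of_ne hij.ne']
        omega
      · rcases eq_or_ne j p with rfl | hjp
        · simp only [Function.update_self, Function.update_of_ne hij.ne]
          omega
        · simpa [hip, hjp] using h
  · push Not at hk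
    simpa only [hne _ _ (hk _)] using hA ℓ r g hr hg

/-- Total nonnegativity passes from `A` to the matrix `B` whose column `c + 1` is that of `A` plus
`a` times column `c` of `B`. Only finitely many column operations affect a given minor. -/
theorem TotallyIn.of_recurrence {R : Type*} [CommRing R] {N : Subsemiring R} {A B : ℕ → ℕ → R}
    {a : R} (ha : a ∈ N) (hA : TotallyIn N A) (h0 : ∀ i, B i 0 = A i 0)
    (hs : ∀ i c, B i (c + 1) = A i (c + 1) + a * B i c) : TotallyIn N B := by
  -- Interpolate: the first `k + 1` columns are already those of `B`.
  have key : ∀ k, TotallyIn N fun i c => if c ≤ k then B i c else A i c := by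
    intro k
    induction k with
    | zero =>
      convert hA using 3 with i c
      split_ifs with h
      · obtain rfl : c = 0 := by omega
        exact h0 i
      · rfl
    | succ k ih =>
      refine ih.step ha k (fun i c hc => ?_) fun i => ?_
      · have : c ≤ k + 1 ↔ c ≤ k := by omega
        simp only [this]
      · simp [hs]
  intro ℓ r g hr hg
  have h := key (∑ j, g j) ℓ r g hr hg
  have hle : ∀ j, g j ≤ ∑ j, g j := fun j =>
    Finset.single_le_sum (f := g) (fun _ _ => Nat.zero_le _) (Finset.mem_univ j)
  simpa only [hle, if_true] using h

/-- The upper triangular Toeplitz matrix of a sequence. -/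
def toep {R : Type*} [CommRing R] (h : ℕ → R) (r c : ℕ) : R :=
  if r ≤ c then h (c - r) else 0

theorem TotallyIn.toep_of_recurrence {R : Type*} [CommRing R] {N : Subsemiring R} {h h' : ℕ → R}
    {a : R} (ha : a ∈ N) (hh : TotallyIn N (toep h)) (h0 : h' 0 = h 0)
    (hs : ∀ r, h' (r + 1) = h (r + 1) + a * h' r) : TotallyIn N (toep h') := by
  refine hh.of_recurrence ha (fun i => ?_) fun i c => ?_
  · unfold toep
    split_ifs
    · simpa using h0
    · rfl
  · unfold toep
    rcases lt_trichotomy i (c + 1) with h | rfl | h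
    · have h1 : i ≤ c := by omega
      simp [h1, h.le, Nat.succ_sub h1, hs]
    · simp [h0]
    · have h1 : ¬ i ≤ c := by omega
      have h2 : ¬ i ≤ c + 1 := by omega
      simp [h1, h2]

/-- The Toeplitz matrix of `1, 0, 0, …` is the identity, so its minors are `0` or `1`. -/
theorem totallyIn_toep_single {R : Type*} [CommRing R] (N : Subsemiring R) :
    TotallyIn N (toep fun r => if r = 0 then (1 : R) else 0) := by
  have ht : ∀ r c, toep (fun r => if r = 0 then (1 : R) else 0) r c = if r = c then 1 else 0 := by
    intro r c
    unfold toep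
    simp only [Nat.sub_eq_zero_iff_le]
    split_ifs <;> first | rfl | omega
  intro ℓ r g hr hg
  simp only [ht]
  by_cases hsub : ∀ j, g j ∈ Set.range r
  · -- The ranges have equal size, so the row and column indices coincide.
    have hrange : Set.range g = Set.range r := by
      refine Set.eq_of_subset_of_ncard_le (Set.range_subset_iff.2 hsub) ?_ (Set.finite_range r)
      rw [← Set.image_univ, ← Set.image_univ, Set.ncard_image_of_injective _ hr.injective,
        Set.ncard_image_of_injective _ hg.injective]
    have hgr : g = r := (hg.range_inj hr).1 hrange
    subst hgr
    have : (Matrix.of fun i j => if g i = g j then (1 : R) else 0) = 1 := by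
      ext i j
      simp [Matrix.one_apply, hg.injective.eq_iff]
    rw [this, Matrix.det_one]
    exact N.one_mem
  · push Not at hsub
    obtain ⟨j, hj⟩ := hsub
    rw [Matrix.det_eq_zero_of_column_eq_zero j]
    · exact N.zero_mem
    · intro i
      have : r i ≠ g j := fun h => hj ⟨i, h⟩
      simp [this]

open Classical in
/-- The complete homogeneous symmetric polynomial of degree `r` evaluated at a family `v` of
elements of a commutative ring. -/
noncomputable def hval {R : Type*} [CommRing R] (α : Type) [Fintype α] (v : α → R) (r : ℕ) : R :=
  ∑ s : Sym α r, ((s : Multiset α).map v).prod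

/-- The decidable equality used in the definition is immaterial. -/
theorem hval_eq {R : Type*} [CommRing R] (α : Type) [Fintype α] [DecidableEq α] (v : α → R)
    (r : ℕ) : hval α v r = ∑ s : Sym α r, ((s : Multiset α).map v).prod := by
  unfold hval
  congr!

theorem hval_zero {R : Type*} [CommRing R] (α : Type) [Fintype α] (v : α → R) :
    hval α v 0 = 1 := by
  classical
  unfold hval
  rw [Fintype.sum_eq_single (Sym.nil : Sym α 0) fun s hs => (hs (Subsingleton.elim _ _)).elim]
  simp

/-- A multiset of size `r + 1` either contains the new element `none` or lives in `α`. -/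
theorem hval_option {R : Type*} [CommRing R] (α : Type) [Fintype α] (v : Option α → R) (r : ℕ) :
    hval (Option α) v (r + 1) =
      hval α (fun x => v (some x)) (r + 1) + v none * hval (Option α) v r := by
  classical
  simp only [hval_eq]
  rw [← Equiv.sum_comp (symOptionSuccEquiv (α := α) (n := r)).symm, Fintype.sum_sum_type,
    add_comm, Finset.mul_sum]
  congr 1
  · refine Finset.sum_congr rfl fun s _ => ?_
    simp [symOptionSuccEquiv, Sym.coe_map, Multiset.map_map]
  · refine Finset.sum_congr rfl fun s _ => ?_
    simp [symOptionSuccEquiv, Sym.coe_cons]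

theorem hval_equiv {R : Type*} [CommRing R] {α β : Type} [Fintype α] [Fintype β] (e : α ≃ β)
    (v : β → R) : hval α (fun x => v (e x)) = hval β v := by
  classical
  funext r
  unfold hval
  rw [← Equiv.sum_comp (Sym.equivCongr e)]
  refine Finset.sum_congr rfl fun s _ => ?_
  simp [Sym.equivCongr, Sym.coe_map, Multiset.map_map]

theorem totallyIn_toep_hval {R : Type*} [CommRing R] (N : Subsemiring R) (α : Type) [Fintype α] :
    ∀ v : α → R, (∀ x, v x ∈ N) → TotallyIn N (toep (hval α v)) := by
  refine Fintype.induction_empty_option (P := fun α _ =>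
    ∀ v : α → R, (∀ x, v x ∈ N) → TotallyIn N (toep (hval α v))) ?_ ?_ ?_ α
  · intro α β _ e ih v hv
    let _ := Fintype.ofEquiv β e.symm
    rw [← hval_equiv e v]
    exact ih (fun x => v (e x)) fun x => hv _
  · intro v _
    convert totallyIn_toep_single N with r
    rcases r with _ | r
    · simp [hval_zero]
    · simp [hval]
  · intro α _ ih v hv
    refine (ih (fun x => v (some x)) fun x => hv _).toep_of_recurrence (hv none) ?_
      fun r => hval_option α v r
    rw [hval_zero, hval_zero]

/-- The polynomials with nonnegative coefficients, encoded as the image of the polynomials over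
`ℝ≥0`. -/
noncomputable def nonnegPoly (n : ℕ) : Subsemiring (MvPolynomial (Fin n) ℝ) :=
  (MvPolynomial.map (σ := Fin n) NNReal.toRealHom).rangeS

/-- For every partition `λ = (λ_1 ≥ … ≥ λ_ℓ ≥ 0)` and every `n ≥ 1`,
the Jacobi–Trudi determinant `det[h_{λ_i − i + j}]_{i,j=1}^{ℓ}` has nonnegative
coefficients as a polynomial in `a_1, …, a_n`. -/
theorem jacobiTrudi_det_nonneg_coeffs (n ℓ : ℕ) (hn : 1 ≤ n)
    (lam : Fin ℓ → ℕ) (hlam : Antitone lam) :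
    ∀ d : Fin n →₀ ℕ,
      0 ≤ coeff d
        (Matrix.det (Matrix.of fun i j : Fin ℓ =>
          hInt n ((lam i : ℤ) - ((i : ℕ) : ℤ) + ((j : ℕ) : ℤ)))) := by
  intro d
  have hT := totallyIn_toep_hval (nonnegPoly n) (Fin n) (fun x => X x)
    fun x => ⟨X x, by simp⟩
  have hle : ∀ j, lam j ≤ ∑ j, lam j := fun j =>
    Finset.single_le_sum (f := lam) (fun _ _ => Nat.zero_le _) (Finset.mem_univ j)
  set C := ∑ j, lam j
  have hdet := hT ℓ (fun i => C + i - lam i) (fun j => C + j)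
    (fun i j hij => by
      have h1 := hlam hij.le
      have h2 := hle i
      have h3 : (i : ℕ) < j := hij
      show C + (i : ℕ) - lam i < C + (j : ℕ) - lam j
      omega)
    (fun i j hij => Nat.add_lt_add_left hij C)
  -- The shift by `C` makes all indices natural numbers without truncated subtraction.
  have hM : (Matrix.of fun i j : Fin ℓ =>
      hInt n ((lam i : ℤ) - ((i : ℕ) : ℤ) + ((j : ℕ) : ℤ))) =
      Matrix.of fun i j : Fin ℓ => toep (hval (Fin n) fun x => X x) (C + i - lam i) (C + j) := by
    ext1 i j
    have h2 := hle i
    simp only [Matrix.of_apply, hInt, toep]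
    have hiff : (0 : ℤ) ≤ (lam i : ℤ) - ((i : ℕ) : ℤ) + ((j : ℕ) : ℤ) ↔
        C + (i : ℕ) - lam i ≤ C + j := by omega
    simp only [hiff]
    split_ifs with h
    · have : ((lam i : ℤ) - ((i : ℕ) : ℤ) + ((j : ℕ) : ℤ)).toNat =
          C + (j : ℕ) - (C + i - lam i) := by omega
      rw [this]
      unfold hpoly hval
      congr!
    · rfl
  rw [hM]
  obtain ⟨q, hq⟩ := hdet
  rw [← hq, coeff_map]
  exact (coeff d q).2
end

section
/- Fix a real number t with 0 ≤ t < 1 and a partition λ = (λ_1 ≥ … ≥ λ_n ≥ 0). Then every coefficient of the Hall–Littlewood polynomial P_λ(a_1,…,a_n;t), viewed as a polynomial in a_1,…,a_n, is nonnegative. -/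
/-!
The proof is a positivity form of the branching rule for `R_λ = v_λ(t) P_λ`, where `v_λ(t) > 0`.

Write `R_(r,l) = Φ_r R_l` with
`(Φ_r g)(s) = Σ_{a ∈ s} a^r ∏_{b ∈ s, b ≠ a} (a - t b)/(a - b) · g(s \ {a})`, split off a variable
`y`, and let `D_r g = (Φ_r g)(s ∪ {y}) - Φ_r (g(· ∪ {y}))(s)` be the defect of the naive branching.
Partial fractions give two identities:

* `D_{r+1} g = y (D_r g + (1 - t) Φ_r (g(· ∪ {y})))` (`hlD_succ`);
* `D_r Φ_r = t Φ_r D_r` (`hlD_hlPhi`).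

By induction on `l` they show that, for `r` at least the largest part of `l`, both `D_r R_l` and
`R_(r,l)(s ∪ {y})` are nonnegative combinations of functions `y^e R_μ(s)` with `μ` a partition
(`hlR_branch`): the second identity treats `r` equal to the first part of `l`, and the first one
increases `r`. Induction on the number of variables then shows that `R_λ` agrees, at points with
distinct coordinates, with a polynomial with nonnegative coefficients (`hlR_exists_poly`).
By `eval_hlNumerator`, this polynomial and `v_λ(t) P` have the same product with the
Vandermonde polynomial, so they are equal.
-/

open MvPolynomial

/-- The Vandermonde product `∏_{1 ≤ i < j ≤ n} (a_i − a_j)`. -/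
noncomputable def vand (n : ℕ) : MvPolynomial (Fin n) ℝ :=
  ∏ p ∈ Finset.univ.filter (fun p : Fin n × Fin n => p.1 < p.2), (X p.1 - X p.2)

/-- The `t`-deformed Vandermonde product `∏_{1 ≤ i < j ≤ n} (a_i − t a_j)`. -/
noncomputable def tvand (n : ℕ) (t : ℝ) : MvPolynomial (Fin n) ℝ :=
  ∏ p ∈ Finset.univ.filter (fun p : Fin n × Fin n => p.1 < p.2), (X p.1 - C t * X p.2)

/-- `Σ_{w ∈ S_n} sgn(w) · w(a^λ ∏_{i<j} (a_i − t a_j))`, which equals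
`(Σ_{w ∈ S_n} w(a^λ ∏_{i<j} (a_i − t a_j)/(a_i − a_j))) · ∏_{i<j}(a_i − a_j)`. -/
noncomputable def hlNumerator (n : ℕ) (t : ℝ) (lam : Fin n → ℕ) : MvPolynomial (Fin n) ℝ :=
  ∑ w : Equiv.Perm (Fin n),
    ((Equiv.Perm.sign w : ℤ) : ℝ) • rename ⇑w ((∏ i, X i ^ lam i) * tvand n t)

/-- `m_k(λ)`: the number of parts of `λ = (λ_1, …, λ_n)` equal to `k`. -/
def mkcount (n : ℕ) (lam : Fin n → ℕ) (k : ℕ) : ℕ :=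
  (Finset.univ.filter (fun i => lam i = k)).card

/-- `v_λ(t) = ∏_{k ≥ 0} ∏_{i=1}^{m_k(λ)} (1 − t^i)/(1 − t)`. -/
noncomputable def vlam (n : ℕ) (t : ℝ) (lam : Fin n → ℕ) : ℝ :=
  ∏ k ∈ Finset.image lam Finset.univ,
    ∏ i ∈ Finset.range (mkcount n lam k), (1 - t ^ (i + 1)) / (1 - t)

/-- `P` is the Hall–Littlewood polynomial `P_λ(a_1,…,a_n;t)`, characterized by the
denominator-cleared form of
`P_λ = (1/v_λ(t)) Σ_{w ∈ S_n} w(a^λ ∏_{i<j} (a_i − t a_j)/(a_i − a_j))`,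
namely `v_λ(t) · P · ∏_{i<j}(a_i − a_j) = Σ_{w ∈ S_n} sgn(w) w(a^λ ∏_{i<j}(a_i − t a_j))`. -/
def IsHL (n : ℕ) (t : ℝ) (lam : Fin n → ℕ) (P : MvPolynomial (Fin n) ℝ) : Prop :=
  C (vlam n t lam) * P * vand n = hlNumerator n t lam

/-! ### Creation operators and the defect -/

/-- The weight `∏_{b ∈ s} (a - t b)/(a - b)`. -/
noncomputable def hlWeight (t a : ℝ) (s : Finset ℝ) : ℝ :=
  ∏ b ∈ s, (a - t * b) / (a - b)

/-- The creation operator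
`(Φ_r g)(s) = Σ_{a ∈ s} a^r ∏_{b ∈ s, b ≠ a} (a - t b)/(a - b) · g(s \ {a})`. A symmetric function
evaluated at pairwise distinct points is encoded as a function of the finite set of these points. -/
noncomputable def hlPhi (t : ℝ) (r : ℕ) (g : Finset ℝ → ℝ) (s : Finset ℝ) : ℝ :=
  ∑ a ∈ s, a ^ r * hlWeight t a (s.erase a) * g (s.erase a)

/-- The unnormalized Hall–Littlewood function `R_λ = v_λ(t) P_λ`, built by adding the parts of `λ`
one at a time; it is meaningful on sets whose cardinality is the length of `λ`. -/
noncomputable def hlR (t : ℝ) : List ℕ → Finset ℝ → ℝ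
  | [] => fun _ => 1
  | r :: l => hlPhi t r (hlR t l)

/-- The defect `D_r g`: the part of `(Φ_r g)(s ∪ {y})` left over when `Φ_r` is applied in the
variables `s` only, with `y` as a spectator. -/
noncomputable def hlD (t : ℝ) (r : ℕ) (g : Finset ℝ → ℝ) (y : ℝ) (s : Finset ℝ) : ℝ :=
  hlPhi t r g (insert y s) - hlPhi t r (fun u => g (insert y u)) s

lemma hlWeight_insert (t a y : ℝ) (s : Finset ℝ) (h : y ∉ s) :
    hlWeight t a (insert y s) = (a - t * y) / (a - y) * hlWeight t a s := by
  simp [hlWeight, Finset.prod_insert h]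

lemma hlWeight_erase (t a y : ℝ) (s : Finset ℝ) (h : y ∈ s) :
    hlWeight t a s = (a - t * y) / (a - y) * hlWeight t a (s.erase y) := by
  exact (Finset.mul_prod_erase s (fun b => (a - t * b) / (a - b)) h).symm

lemma hlPhi_insert (t : ℝ) (r : ℕ) (g : Finset ℝ → ℝ) (y : ℝ) (s : Finset ℝ) (h : y ∉ s) :
    hlPhi t r g (insert y s) = y ^ r * hlWeight t y s * g s +
      ∑ a ∈ s, a ^ r * ((a - t * y) / (a - y)) * hlWeight t a (s.erase a)
        * g (insert y (s.erase a)) := by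
  rw [hlPhi, Finset.sum_insert h, Finset.erase_insert h]
  congr 1
  refine Finset.sum_congr rfl fun a ha => ?_
  have hne : y ≠ a := fun e => h (e ▸ ha)
  rw [Finset.erase_insert_of_ne hne, hlWeight_insert _ _ _ _ (by simp [h])]
  ring

lemma hlD_eq (t : ℝ) (r : ℕ) (g : Finset ℝ → ℝ) (y : ℝ) (s : Finset ℝ) (h : y ∉ s) :
    hlD t r g y s = y ^ r * hlWeight t y s * g s +
      ∑ a ∈ s, a ^ r * ((1 - t) * y / (a - y)) * hlWeight t a (s.erase a)
        * g (insert y (s.erase a)) := by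
  rw [hlD, hlPhi_insert _ _ _ _ _ h, hlPhi, add_sub_assoc, ← Finset.sum_sub_distrib]
  congr 1
  refine Finset.sum_congr rfl fun a ha => ?_
  have hne : a - y ≠ 0 := sub_ne_zero.2 fun e => h (e ▸ ha)
  field_simp
  ring

/-- Raising the exponent of the defect: `D_{r+1} = y (D_r + (1 - t) Φ_r)`. -/
lemma hlD_succ (t : ℝ) (r : ℕ) (g : Finset ℝ → ℝ) (y : ℝ) (s : Finset ℝ) (h : y ∉ s) :
    hlD t (r + 1) g y s =
      y * (hlD t r g y s + (1 - t) * hlPhi t r (fun u => g (insert y u)) s) := by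
  rw [hlD_eq _ _ _ _ _ h, hlD_eq _ _ _ _ _ h, hlPhi, Finset.mul_sum, add_assoc,
    ← Finset.sum_add_distrib, mul_add, Finset.mul_sum]
  congr 1
  · ring
  refine Finset.sum_congr rfl fun a ha => ?_
  have hne : a - y ≠ 0 := sub_ne_zero.2 fun e => h (e ▸ ha)
  field_simp
  ring

lemma sum_sum_erase_eq_zero (s : Finset ℝ) (H : ℝ → ℝ → ℝ)
    (hH : ∀ a ∈ s, ∀ b ∈ s, a ≠ b → H a b + H b a = 0) :
    ∑ a ∈ s, ∑ b ∈ s.erase a, H a b = 0 := by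
  have e1 : ∑ a ∈ s, ∑ b ∈ s.erase a, H a b = ∑ a ∈ s, ∑ b ∈ s, if a ≠ b then H a b else 0 := by
    refine Finset.sum_congr rfl fun a _ => ?_
    rw [← Finset.sum_filter]
    refine Finset.sum_congr ?_ fun _ _ => rfl
    ext b
    simp only [Finset.mem_erase, Finset.mem_filter]
    tauto
  have e2 := e1
  rw [Finset.sum_comm] at e2
  have e3 : (∑ a ∈ s, ∑ b ∈ s, if a ≠ b then H a b else 0) +
      (∑ b ∈ s, ∑ a ∈ s, if a ≠ b then H a b else 0) = 0 := by
    rw [← Finset.sum_add_distrib]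
    refine Finset.sum_eq_zero fun a ha => ?_
    rw [← Finset.sum_add_distrib]
    refine Finset.sum_eq_zero fun b hb => ?_
    by_cases hab : a = b
    · simp [hab]
    · simpa [hab, Ne.symm hab] using hH a ha b hb hab
  rw [Finset.sum_comm (f := fun b a => if a ≠ b then H a b else 0), ← e1] at e3
  linarith

/-- The commutation relation `D_r Φ_r = t Φ_r D_r`. The terms that remove `y` agree one by one;
those that remove two points `a, b` of `s` cancel against the same terms with `a, b` exchanged. -/
lemma hlD_hlPhi (t : ℝ) (r : ℕ) (g : Finset ℝ → ℝ) (y : ℝ) (s : Finset ℝ) (h : y ∉ s) :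
    hlD t r (hlPhi t r g) y s = t * hlPhi t r (hlD t r g y) s := by
  have hL : hlD t r (hlPhi t r g) y s =
      ∑ a ∈ s, (t * a ^ r * y ^ r * hlWeight t a (s.erase a) * hlWeight t y (s.erase a)
        * g (s.erase a)) +
      ∑ a ∈ s, ∑ b ∈ s.erase a, a ^ r * b ^ r * ((1 - t) * y / (a - y)) *
        ((b - t * y) / (b - y)) * hlWeight t a (s.erase a) * hlWeight t b ((s.erase a).erase b)
        * g (insert y ((s.erase a).erase b)) := by
    rw [hlD_eq _ _ _ _ _ h, hlPhi, Finset.mul_sum, ← Finset.sum_add_distrib,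
      ← Finset.sum_add_distrib]
    refine Finset.sum_congr rfl fun a ha => ?_
    have hne : a - y ≠ 0 := sub_ne_zero.2 fun e => h (e ▸ ha)
    have hne' : y - a ≠ 0 := sub_ne_zero.2 fun e => h (e ▸ ha)
    rw [hlPhi_insert _ _ _ _ _ (by simp [h]), hlWeight_erase t y a s ha, mul_add, ← add_assoc,
      Finset.mul_sum]
    congr 1
    · have : (1 - t) * y / (a - y) = t - (y - t * a) / (y - a) := by
        rw [← neg_sub a y, div_neg]; field_simp; ring
      rw [this]; ring
    · refine Finset.sum_congr rfl fun b _ => ?_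
      ring
  have hR : t * hlPhi t r (hlD t r g y) s =
      ∑ a ∈ s, (t * a ^ r * y ^ r * hlWeight t a (s.erase a) * hlWeight t y (s.erase a)
        * g (s.erase a)) +
      ∑ a ∈ s, ∑ b ∈ s.erase a, t * a ^ r * b ^ r * ((1 - t) * y / (b - y))
        * hlWeight t a (s.erase a) * hlWeight t b ((s.erase a).erase b)
        * g (insert y ((s.erase a).erase b)) := by
    rw [hlPhi, Finset.mul_sum, ← Finset.sum_add_distrib]
    refine Finset.sum_congr rfl fun a ha => ?_
    rw [hlD_eq _ _ _ _ _ (by simp [h]), mul_add, mul_add, Finset.mul_sum, Finset.mul_sum]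
    congr 1
    · ring
    · refine Finset.sum_congr rfl fun b _ => ?_
      ring
  rw [hL, hR]
  congr 1
  rw [← sub_eq_zero, ← Finset.sum_sub_distrib]
  simp only [← Finset.sum_sub_distrib]
  refine sum_sum_erase_eq_zero s _ fun a ha b hb hab => ?_
  have ya : a - y ≠ 0 := sub_ne_zero.2 fun e => h (e ▸ ha)
  have yb : b - y ≠ 0 := sub_ne_zero.2 fun e => h (e ▸ hb)
  have h1 : a - b ≠ 0 := sub_ne_zero.2 hab
  have h2 : b - a ≠ 0 := sub_ne_zero.2 hab.symm
  rw [hlWeight_erase t a b (s.erase a) (by simp [hb, hab.symm]),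
    hlWeight_erase t b a (s.erase b) (by simp [ha, hab]), Finset.erase_right_comm (a := b) (b := a)]
  generalize hlWeight t a ((s.erase a).erase b) = wa
  generalize hlWeight t b ((s.erase a).erase b) = wb
  generalize g (insert y ((s.erase a).erase b)) = G
  rw [show b - a = -(a - b) by ring, div_neg]
  field_simp
  ring

/-! ### The positive cone and the branching rule -/

/-- The convex cone of functions of `(y, s)` that agree, for `y ∉ s` and `|s| = n`, with a
nonnegative combination of the `y^e R_μ(s)`, where `μ` runs over partitions with `n` parts
(zero parts allowed), all of them at most `r`. -/
inductive HLCone (t : ℝ) (n r : ℕ) : (ℝ → Finset ℝ → ℝ) → Prop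
  | basis (e : ℕ) (m : List ℕ) (hm : m.Pairwise (· ≥ ·)) (hl : m.length = n) (hr : ∀ k ∈ m, k ≤ r) :
      HLCone t n r (fun y s => y ^ e * hlR t m s)
  | add {f g : ℝ → Finset ℝ → ℝ} (hf : HLCone t n r f) (hg : HLCone t n r g) :
      HLCone t n r (fun y s => f y s + g y s)
  | smul {f : ℝ → Finset ℝ → ℝ} (c : ℝ) (hc : 0 ≤ c) (hf : HLCone t n r f) :
      HLCone t n r (fun y s => c * f y s)
  | congr {f g : ℝ → Finset ℝ → ℝ} (hf : HLCone t n r f)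
      (hfg : ∀ y s, y ∉ s → s.card = n → f y s = g y s) : HLCone t n r g

lemma HLCone.mono {t : ℝ} {n r r' : ℕ} (hrr : r ≤ r') {f : ℝ → Finset ℝ → ℝ}
    (hf : HLCone t n r f) : HLCone t n r' f := by
  induction hf with
  | basis e m hm hl hr => exact .basis e m hm hl fun k hk => (hr k hk).trans hrr
  | add _ _ h1 h2 => exact .add h1 h2
  | smul c hc _ h => exact .smul c hc h
  | congr _ hfg h => exact .congr h hfg

lemma HLCone.mulY {t : ℝ} {n r : ℕ} {f : ℝ → Finset ℝ → ℝ}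
    (hf : HLCone t n r f) : HLCone t n r (fun y s => y * f y s) := by
  induction hf with
  | basis e m hm hl hr =>
    exact (HLCone.basis (e + 1) m hm hl hr).congr fun y s _ _ => by ring
  | add _ _ h1 h2 => exact (h1.add h2).congr fun y s _ _ => by ring
  | smul c hc _ h => exact (h.smul c hc).congr fun y s _ _ => by ring
  | congr _ hfg h => exact h.congr fun y s hy hs => by rw [hfg y s hy hs]

lemma HLCone.phi {t : ℝ} {n r : ℕ} {f : ℝ → Finset ℝ → ℝ}
    (hf : HLCone t n r f) : HLCone t (n + 1) r (fun y s => hlPhi t r (f y) s) := by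
  induction hf with
  | basis e m hm hl hr =>
    refine (HLCone.basis e (r :: m) (List.pairwise_cons.2 ⟨hr, hm⟩) (by simp [hl]) ?_).congr
      fun y s _ _ => ?_
    · simpa using hr
    · simp only [hlR, hlPhi, Finset.mul_sum]
      exact Finset.sum_congr rfl fun a _ => by ring
  | add _ _ h1 h2 =>
    refine (h1.add h2).congr fun y s _ _ => ?_
    simp only [hlPhi, ← Finset.sum_add_distrib]
    exact Finset.sum_congr rfl fun a _ => by ring
  | smul c hc _ h =>
    refine (h.smul c hc).congr fun y s _ _ => ?_
    simp only [hlPhi, Finset.mul_sum]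
    exact Finset.sum_congr rfl fun a _ => by ring
  | congr _ hfg h =>
    refine h.congr fun y s hy hs => ?_
    refine Finset.sum_congr rfl fun a ha => ?_
    rw [hfg y (s.erase a) (by simp [hy]) (by rw [Finset.card_erase_of_mem ha, hs]; rfl)]

/-- Branching rule, in positivity form: splitting one variable `y` off `R_{(r, l)}` gives a
nonnegative combination of the `y^e R_μ`. The statement about the defect drives the induction: the
commutation relation `D_r Φ_r = t Φ_r D_r` handles `r` equal to the first part of `l`, and
`hlD_succ` raises `r` from there. -/
lemma hlR_branch (t : ℝ) (ht0 : 0 ≤ t) (ht1 : t ≤ 1) (l : List ℕ) (hl : l.Pairwise (· ≥ ·)) :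
    ∀ r : ℕ, (∀ k ∈ l, k ≤ r) →
      HLCone t l.length r (hlD t r (hlR t l)) ∧
      HLCone t l.length r (fun y s => hlR t (r :: l) (insert y s)) := by
  induction l with
  | nil =>
    intro r _
    have hb : HLCone t 0 r (fun y s => y ^ r * hlR t [] s) :=
      .basis r [] (by simp) rfl (by simp)
    constructor
    · refine hb.congr fun y s _ hs => ?_
      rw [Finset.card_eq_zero] at hs
      subst hs
      simp [hlD, hlPhi, hlR, hlWeight]
    · refine hb.congr fun y s _ hs => ?_
      rw [Finset.card_eq_zero] at hs
      subst hs
      simp [hlPhi, hlR, hlWeight]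
  | cons k l ih =>
    rw [List.pairwise_cons] at hl
    obtain ⟨ihD, ihR⟩ := ih hl.2 k hl.1
    have key : ∀ r : ℕ, k ≤ r → HLCone t (l.length + 1) r (hlD t r (hlR t (k :: l))) := by
      intro r hr
      induction r, hr using Nat.le_induction with
      | base =>
        exact (ihD.phi.smul t ht0).congr fun y s hy _ => (hlD_hlPhi t k (hlR t l) y s hy).symm
      | succ r hr IH =>
        refine ((IH.add ((ihR.mono hr).phi.smul (1 - t) (by linarith))).mulY.mono
          (Nat.le_succ r)).congr fun y s hy _ => ?_
        rw [hlD_succ _ _ _ _ _ hy]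
    intro r hr
    have hkr : k ≤ r := hr k (by simp)
    refine ⟨key r hkr, ((key r hkr).add (ihR.mono hkr).phi).congr fun y s hy _ => ?_⟩
    simp [hlD, hlR]

/-! ### Polynomials with nonnegative coefficients -/

/-- A function of `(y, s)` in the cone is given by a polynomial with nonnegative coefficients as
soon as the `R_μ` with `n` parts are. -/
lemma HLCone.exists_poly {t : ℝ} {n r : ℕ} {f : ℝ → Finset ℝ → ℝ} (hf : HLCone t n r f)
    (H : ∀ m : List ℕ, m.Pairwise (· ≥ ·) → m.length = n →
      ∃ Q : MvPolynomial (Fin n) ℝ, (∀ d, 0 ≤ coeff d Q) ∧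
        ∀ a : Fin n → ℝ, Function.Injective a → hlR t m (Finset.univ.image a) = eval a Q) :
    ∃ Q : MvPolynomial (Fin (n + 1)) ℝ, (∀ d, 0 ≤ coeff d Q) ∧
      ∀ a : Fin (n + 1) → ℝ, Function.Injective a →
        f (a 0) (Finset.univ.image fun i : Fin n => a i.succ) = eval a Q := by
  induction hf with
  | basis e m hm hl hr =>
    obtain ⟨Q, hQ, hQe⟩ := H m hm hl
    refine ⟨rename Fin.succ Q * X 0 ^ e, fun d => ?_, fun a ha => ?_⟩
    · rw [X_pow_eq_monomial, coeff_mul_monomial']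
      split_ifs with hd
      · rw [mul_one]
        by_cases hx : coeff (d - Finsupp.single 0 e) (rename Fin.succ Q) = 0
        · exact hx.ge
        · obtain ⟨u, hu, -⟩ := coeff_rename_ne_zero _ _ _ hx
          rw [← hu, coeff_rename_mapDomain _ (Fin.succ_injective n)]
          exact hQ u
      · exact le_rfl
    · have hs := hQe (fun i => a i.succ) (ha.comp (Fin.succ_injective n))
      simp only [hs, map_mul, map_pow, eval_X, eval_rename]
      rw [mul_comm]
      rfl
  | add _ _ h1 h2 =>
    obtain ⟨Q1, hQ1, e1⟩ := h1
    obtain ⟨Q2, hQ2, e2⟩ := h2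
    refine ⟨Q1 + Q2, fun d => ?_, fun a ha => ?_⟩
    · rw [coeff_add]; exact add_nonneg (hQ1 d) (hQ2 d)
    · simp only [e1 a ha, e2 a ha, map_add]
  | smul c hc _ h =>
    obtain ⟨Q, hQ, e⟩ := h
    refine ⟨C c * Q, fun d => ?_, fun a ha => ?_⟩
    · rw [coeff_C_mul]; exact mul_nonneg hc (hQ d)
    · simp only [e a ha, map_mul, eval_C]
  | congr _ hfg h =>
    obtain ⟨Q, hQ, e⟩ := h
    refine ⟨Q, hQ, fun a ha => ?_⟩
    rw [← e a ha, hfg]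
    · simp [ha.eq_iff]
    · exact (Finset.card_image_of_injective _ (ha.comp (Fin.succ_injective _))).trans (by simp)

lemma hlR_exists_poly (t : ℝ) (ht0 : 0 ≤ t) (ht1 : t ≤ 1) (n : ℕ) :
    ∀ m : List ℕ, m.Pairwise (· ≥ ·) → m.length = n →
      ∃ Q : MvPolynomial (Fin n) ℝ, (∀ d, 0 ≤ coeff d Q) ∧
        ∀ a : Fin n → ℝ, Function.Injective a → hlR t m (Finset.univ.image a) = eval a Q := by
  induction n with
  | zero =>
    intro m _ hm
    rw [List.length_eq_zero_iff] at hm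
    subst hm
    refine ⟨1, fun d => ?_, fun a _ => by simp [hlR]⟩
    rw [coeff_one]
    split_ifs <;> norm_num
  | succ n ih =>
    rintro (_ | ⟨r, l⟩) hm hl
    · simp at hl
    rw [List.pairwise_cons] at hm
    have hl' : l.length = n := by simpa using hl
    have hc := (hlR_branch t ht0 ht1 l hm.2 r hm.1).2
    rw [hl'] at hc
    obtain ⟨Q, hQ, e⟩ := hc.exists_poly ih
    refine ⟨Q, hQ, fun a ha => ?_⟩
    rw [← e a ha]
    congr 1
    ext x
    simp [Fin.exists_fin_succ, eq_comm]

/-! ### Comparison with the symmetrization formula -/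

/-- The product of `f i j` over the pairs `i < j`. -/
noncomputable def pairProd (n : ℕ) (f : Fin n → Fin n → ℝ) : ℝ :=
  ∏ p ∈ Finset.univ.filter (fun p : Fin n × Fin n => p.1 < p.2), f p.1 p.2

lemma pairProd_eq (n : ℕ) (f : Fin n → Fin n → ℝ) :
    pairProd n f = ∏ i, ∏ j ∈ Finset.Ioi i, f i j := by
  rw [pairProd, Finset.prod_filter, Fintype.prod_prod_type]
  refine Finset.prod_congr rfl fun i _ => ?_
  rw [← Finset.prod_filter]
  refine Finset.prod_congr ?_ fun _ _ => rfl
  ext j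
  simp

lemma pairProd_succ (n : ℕ) (f : Fin (n + 1) → Fin (n + 1) → ℝ) :
    pairProd (n + 1) f = (∏ j, f 0 (Fin.succ j)) * pairProd n fun i j => f i.succ j.succ := by
  simp only [pairProd, Finset.prod_filter, Fintype.prod_prod_type]
  rw [Fin.prod_univ_succ]
  simp [Fin.prod_univ_succ]

/-- The difference product is, up to the sign change of the variables, a Vandermonde determinant,
whence it is alternating. -/
lemma pairProd_sub_perm (n : ℕ) (a : Fin n → ℝ) (w : Equiv.Perm (Fin n)) :
    pairProd n (fun i j => a (w i) - a (w j)) =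
      ((Equiv.Perm.sign w : ℤ) : ℝ) * pairProd n (fun i j => a i - a j) := by
  have hdet : ∀ b : Fin n → ℝ,
      pairProd n (fun i j => b i - b j) = (Matrix.vandermonde fun i => -b i).det := by
    intro b
    rw [Matrix.det_vandermonde, pairProd_eq]
    simp only [neg_sub_neg]
  rw [hdet a, hdet (fun i => a (w i)), ← Matrix.det_permute]
  rfl

/-- `R_λ` as the symmetrization of `a^λ ∏_{i<j} (a_i - t a_j)/(a_i - a_j)`. -/
lemma sum_perm_eq_hlR (t : ℝ) (n : ℕ) : ∀ (lam : Fin n → ℕ) (a : Fin n → ℝ),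
    Function.Injective a →
    ∑ w : Equiv.Perm (Fin n), (∏ i, a (w i) ^ lam i) *
      pairProd n (fun i j => (a (w i) - t * a (w j)) / (a (w i) - a (w j))) =
    hlR t (List.ofFn lam) (Finset.univ.image a) := by
  induction n with
  | zero =>
    intro lam a _
    simp [pairProd, hlR]
  | succ n ih =>
    intro lam a ha
    rw [List.ofFn_succ, hlR, hlPhi, Finset.sum_image fun x _ y _ h => ha h,
      ← Equiv.sum_comp (Equiv.Perm.decomposeFin (n := n)).symm, Fintype.sum_prod_type]
    refine Finset.sum_congr rfl fun p _ => ?_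
    set b : Fin n → ℝ := fun i => a (Equiv.swap 0 p i.succ) with hb
    have hbi : Function.Injective b := fun i j h => by
      have := ha h
      simpa using this
    have himg : (Finset.univ.image a).erase (a p) = Finset.univ.image b := by
      ext x
      simp only [Finset.mem_erase, Finset.mem_image, Finset.mem_univ, true_and, hb]
      constructor
      · rintro ⟨hx, q, rfl⟩
        have hq : Equiv.swap 0 p q ≠ 0 := by
          intro e
          apply hx
          rw [Equiv.swap_apply_eq_iff, Equiv.swap_apply_left] at e
          rw [e]
        obtain ⟨i, hi⟩ := Fin.exists_succ_eq.2 hq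
        exact ⟨i, by rw [hi, Equiv.swap_apply_self]⟩
      · rintro ⟨i, rfl⟩
        refine ⟨fun e => ?_, _, rfl⟩
        have := ha e
        rw [Equiv.swap_apply_eq_iff, Equiv.swap_apply_right] at this
        exact Fin.succ_ne_zero i this
    rw [himg, ← ih (fun i => lam i.succ) b hbi, Finset.mul_sum]
    refine Finset.sum_congr rfl fun w _ => ?_
    rw [pairProd_succ, Fin.prod_univ_succ]
    simp only [Equiv.Perm.decomposeFin_symm_apply_zero, Equiv.Perm.decomposeFin_symm_apply_succ]
    have hw : hlWeight t (a p) (Finset.univ.image b) =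
        ∏ j, (a p - t * b (w j)) / (a p - b (w j)) := by
      rw [hlWeight, Finset.prod_image fun x _ y _ h => hbi h]
      exact (Equiv.prod_comp w fun j => (a p - t * b j) / (a p - b j)).symm
    rw [hw]
    simp only [hb]
    ring

lemma eval_vand (n : ℕ) (a : Fin n → ℝ) : eval a (vand n) = pairProd n fun i j => a i - a j := by
  simp [vand, pairProd, map_prod]

lemma pairProd_sub_eq_zero (n : ℕ) (a : Fin n → ℝ) :
    pairProd n (fun i j => a i - a j) = 0 ↔ ¬ Function.Injective a := by
  rw [pairProd, Finset.prod_eq_zero_iff]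
  constructor
  · rintro ⟨p, hp, h⟩ hi
    exact (Finset.mem_filter.1 hp).2.ne (hi (sub_eq_zero.1 h))
  · intro h
    simp only [Function.Injective, not_forall] at h
    obtain ⟨i, j, hij, hne⟩ := h
    rcases lt_or_gt_of_ne hne with h | h
    · exact ⟨(i, j), by simpa using h, sub_eq_zero.2 hij⟩
    · exact ⟨(j, i), by simpa using h, sub_eq_zero.2 hij.symm⟩

lemma eval_hlNumerator (n : ℕ) (t : ℝ) (lam : Fin n → ℕ) (a : Fin n → ℝ)
    (ha : Function.Injective a) :
    eval a (hlNumerator n t lam) =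
      hlR t (List.ofFn lam) (Finset.univ.image a) * eval a (vand n) := by
  rw [← sum_perm_eq_hlR t n lam a ha, eval_vand, Finset.sum_mul, hlNumerator, map_sum]
  refine Finset.sum_congr rfl fun w _ => ?_
  have hs : ((Equiv.Perm.sign w : ℤ) : ℝ) * ((Equiv.Perm.sign w : ℤ) : ℝ) = 1 := by
    rw [← Int.cast_mul, ← Units.val_mul, Int.units_mul_self]; simp
  have h0 : pairProd n (fun i j => a (w i) - a (w j)) ≠ 0 := by
    rw [Ne, pairProd_sub_eq_zero n (fun i => a (w i)), not_not]
    exact ha.comp w.injective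
  have hdiv : pairProd n (fun i j => (a (w i) - t * a (w j)) / (a (w i) - a (w j))) =
      pairProd n (fun i j => a (w i) - t * a (w j)) / pairProd n (fun i j => a (w i) - a (w j)) :=
    Finset.prod_div_distrib ..
  have hv : pairProd n (fun i j => a i - a j) =
      ((Equiv.Perm.sign w : ℤ) : ℝ) * pairProd n (fun i j => a (w i) - a (w j)) := by
    rw [pairProd_sub_perm, ← mul_assoc, hs, one_mul]
  have ht : eval a (rename w (tvand n t)) = pairProd n (fun i j => a (w i) - t * a (w j)) := by
    simp [tvand, pairProd, map_prod]
  rw [hdiv, hv, smul_eval, map_mul, map_mul, ht]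
  simp only [map_prod, map_pow, rename_X, eval_X]
  field_simp

lemma vlam_pos (n : ℕ) (t : ℝ) (ht0 : 0 ≤ t) (ht1 : t < 1) (lam : Fin n → ℕ) :
    0 < vlam n t lam := by
  refine Finset.prod_pos fun k _ => Finset.prod_pos fun i _ => div_pos ?_ (by linarith)
  have := pow_lt_one₀ ht0 ht1 (Nat.succ_ne_zero i)
  simpa using this

/-- For `0 ≤ t < 1` and any partition `λ = (λ_1 ≥ … ≥ λ_n ≥ 0)`,
every coefficient of the Hall–Littlewood polynomial `P_λ(a_1,…,a_n;t)` is nonnegative. -/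
theorem hallLittlewood_nonneg_coeffs (n : ℕ) (t : ℝ) (ht0 : 0 ≤ t) (ht1 : t < 1)
    (lam : Fin n → ℕ) (hlam : Antitone lam)
    (P : MvPolynomial (Fin n) ℝ) (hP : IsHL n t lam P) :
    ∀ d : Fin n →₀ ℕ, 0 ≤ coeff d P := by
  obtain ⟨Q, hQ, hQe⟩ := hlR_exists_poly t ht0 ht1.le n (List.ofFn lam)
    (List.pairwise_ofFn.2 fun i j hij => hlam hij.le) (by simp)
  have hmul : C (vlam n t lam) * P * vand n = Q * vand n := by
    refine MvPolynomial.funext fun a => ?_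
    by_cases ha : Function.Injective a
    · rw [hP, eval_hlNumerator n t lam a ha, hQe a ha, map_mul]
    -- Both sides vanish where two variables coincide.
    · have h0 : eval a (vand n) = 0 := by rw [eval_vand, pairProd_sub_eq_zero]; exact ha
      rw [map_mul, map_mul (eval a) Q, h0, mul_zero, mul_zero]
  have hv : vand n ≠ 0 := by
    intro h
    have hinj : Function.Injective (fun i : Fin n => ((i : ℕ) : ℝ)) := fun i j hij => by
      simpa [Fin.ext_iff] using hij
    refine (pairProd_sub_eq_zero n _).1 ?_ hinj
    rw [← eval_vand, h, map_zero]
  have hPQ : C (vlam n t lam) * P = Q := mul_right_cancel₀ hv hmul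
  intro d
  have hd := hQ d
  rw [← hPQ, coeff_C_mul] at hd
  exact nonneg_of_mul_nonneg_right hd (vlam_pos n t ht0 ht1 lam)
end

section
/- Fix n ≥ 1 and a real number t with 0 ≤ t < 1. For any real t, g_1, g_2, …, g_n are algebraically independent over ℝ and generate the algebra of symmetric polynomials: Λ_n = ℝ[g_1, …, g_n], where Λ_n is the ℝ-algebra of symmetric polynomials in a_1,…,a_n. -/
/-!
Write `G_k = v_{(k)}(t) g_k / (1 - t)`, `V = ∏_{i<j} (a_i - a_j)` and
`T = ∏_{i<j} (a_i - t a_j)`, so that `G_k V = ∑_w sgn(w) w(a_1^k T)`; here `v_{(k)}(t) ≠ 0` because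
`0 ≤ t < 1`. Antisymmetrization is linear over symmetric polynomials, and
`∑_{j<k} (-1)^j e_j a_1^{k-j} = ± a_1 e_{k-1}(a_2, …, a_n)` (`sum_esymm_mul_pow`), hence
`h = ∑_{j<k} (-1)^j e_j G_{k-j}` satisfies `h V = ± ∑_w sgn(w) w(a_1 e_{k-1}(a_2, …, a_n) T)`.

Now `h` is symmetric, being a quotient of antisymmetric polynomials, it is homogeneous of degree
`k`, and it has degree at most one in each variable, since `T` has in each variable at most the
degree of `V`. Such a polynomial is a multiple `c e_k` (`eq_smul_esymm`). The constant `c` is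
nonzero because the right-hand side is (`antisym_firstSum_ne_zero`): for `t > 0` only `w = 1`
survives evaluation at `(1, t, …, t^{n-1})`, and for `t = 0` the coefficient of the dominant monomial
is positive.

The resulting recurrence (`exists_recurrence`) gives `e_k ∈ ℝ[g_1, …, g_n]` by induction, so the
`g_k`, themselves symmetric, generate the symmetric polynomials. Since the latter form a
polynomial ring in `n` variables, `n` generators are algebraically independent
(`algebraicIndependent_of_adjoin_eq`).
-/

open MvPolynomial

/-- The one-row partition `(k, 0, …, 0)` with `n` parts. -/
def oneRow (n k : ℕ) : Fin n → ℕ := fun i => if (i : ℕ) = 0 then k else 0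

/-- `g` equals `g_k := (1 − t)·P_{(k)}(a_1,…,a_n;t)`, via the denominator-cleared
characterization of the Hall–Littlewood polynomial `P_{(k)}`:
`v_{(k)}(t) · g · ∏_{i<j}(a_i − a_j) = (1−t) · Σ_{w} sgn(w) w(a_1^k ∏_{i<j}(a_i − t a_j))`. -/
def IsG (n : ℕ) (t : ℝ) (k : ℕ) (g : MvPolynomial (Fin n) ℝ) : Prop :=
  C (vlam n t (oneRow n k)) * g * vand n = C (1 - t) * hlNumerator n t (oneRow n k)

/-! ### Antisymmetrization and the Vandermonde product -/

/-- The antisymmetrizer `f ↦ ∑_w sgn(w) w(f)`. -/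
noncomputable def antisym {n : ℕ} (f : MvPolynomial (Fin n) ℝ) : MvPolynomial (Fin n) ℝ :=
  ∑ w : Equiv.Perm (Fin n), ((Equiv.Perm.sign w : ℤ) : ℝ) • rename ⇑w f

lemma vand_ne_zero (n : ℕ) : vand n ≠ 0 := by
  refine Finset.prod_ne_zero_iff.2 fun p hp => ?_
  rw [sub_ne_zero]
  intro h
  exact (Finset.mem_filter.1 hp).2.ne (X_injective h)

lemma vand_eq_det (n : ℕ) :
    vand n = (Matrix.vandermonde (fun i : Fin n => -(X i : MvPolynomial (Fin n) ℝ))).det := by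
  rw [Matrix.det_vandermonde, vand, Finset.prod_filter, Fintype.prod_prod_type]
  refine Finset.prod_congr rfl fun i _ => ?_
  rw [← Finset.prod_filter]
  refine Finset.prod_congr (by ext j; simp) fun j _ => by ring

lemma rename_vand {n : ℕ} (u : Equiv.Perm (Fin n)) :
    rename ⇑u (vand n) = ((Equiv.Perm.sign u : ℤ) : ℝ) • vand n := by
  rw [vand_eq_det, AlgHom.map_det]
  have h := Matrix.det_permute u
    (Matrix.vandermonde (fun i : Fin n => -(X i : MvPolynomial (Fin n) ℝ)))
  have e : (rename ⇑u).mapMatrix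
      (Matrix.vandermonde (fun i : Fin n => -(X i : MvPolynomial (Fin n) ℝ))) =
      (Matrix.vandermonde (fun i : Fin n => -(X i : MvPolynomial (Fin n) ℝ))).submatrix u id := by
    ext i j : 2
    simp [Matrix.vandermonde_apply]
  rw [e, h, smul_eq_C_mul]
  simp

lemma rename_antisym {n : ℕ} (u : Equiv.Perm (Fin n)) (f : MvPolynomial (Fin n) ℝ) :
    rename ⇑u (antisym f) = ((Equiv.Perm.sign u : ℤ) : ℝ) • antisym f := by
  simp only [antisym, map_sum, map_smul, rename_rename, Finset.smul_sum, smul_smul]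
  refine Fintype.sum_equiv (Equiv.mulLeft u) _ _ fun w => ?_
  rw [Equiv.coe_mulLeft, Equiv.Perm.coe_mul, Equiv.Perm.sign_mul]
  congr 1
  rcases Int.units_eq_one_or (Equiv.Perm.sign u) with h | h <;> simp [h]

lemma antisym_mul {n : ℕ} {s : MvPolynomial (Fin n) ℝ} (hs : s.IsSymmetric)
    (f : MvPolynomial (Fin n) ℝ) : antisym (s * f) = s * antisym f := by
  simp only [antisym, map_mul, Finset.mul_sum, mul_smul_comm]
  exact Finset.sum_congr rfl fun w _ => by rw [hs w]

lemma antisym_sum {n : ℕ} {ι : Type*} (s : Finset ι) (f : ι → MvPolynomial (Fin n) ℝ) :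
    antisym (∑ i ∈ s, f i) = ∑ i ∈ s, antisym (f i) := by
  simp only [antisym, map_sum, Finset.smul_sum]
  exact Finset.sum_comm

/-- A quotient of an antisymmetric polynomial by the Vandermonde product is symmetric. -/
lemma isSymmetric_of_mul_vand {n : ℕ} {h f : MvPolynomial (Fin n) ℝ}
    (hf : h * vand n = antisym f) : h.IsSymmetric := by
  intro u
  have h1 := congrArg (rename ⇑u) hf
  rw [map_mul, rename_vand, rename_antisym, ← hf, mul_smul_comm] at h1
  have h2 : ((Equiv.Perm.sign u : ℤ) : ℝ) ≠ 0 := by simp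
  exact mul_right_cancel₀ (vand_ne_zero n) (smul_right_injective _ h2 h1)

lemma degreeOf_tvand_le (n : ℕ) (t : ℝ) (i : Fin n) :
    (tvand n t).degreeOf i ≤ (vand n).degreeOf i := by
  have hne : ∀ p ∈ Finset.univ.filter (fun p : Fin n × Fin n => p.1 < p.2),
      (X p.1 - X p.2 : MvPolynomial (Fin n) ℝ) ≠ 0 := fun p hp =>
    Finset.prod_ne_zero_iff.1 (vand_ne_zero n) p hp
  rw [vand, degreeOf_prod_eq _ _ hne, tvand]
  refine (degreeOf_prod_le _ _ _).trans (Finset.sum_le_sum fun p hp => ?_)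
  have hlt := (Finset.mem_filter.1 hp).2
  have h1 : degreeOf i (X p.1 - C t * X p.2 : MvPolynomial (Fin n) ℝ) ≤
      max (if i = p.1 then 1 else 0) (if i = p.2 then 1 else 0) := by
    refine (degreeOf_sub_le _ _ _).trans (max_le_max (degreeOf_X _ _).le ?_)
    exact (degreeOf_C_mul_le _ _ _).trans (degreeOf_X _ _).le
  refine h1.trans ?_
  have key : ∀ a b : Fin n, a ≠ b →
      1 ≤ degreeOf a (X a - X b : MvPolynomial (Fin n) ℝ) := by
    intro a b hab
    have : Finsupp.single a 1 ∈ (X a - X b : MvPolynomial (Fin n) ℝ).support := by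
      simp [mem_support_iff, coeff_X, Finsupp.single_left_inj, hab.symm]
    simpa using monomial_le_degreeOf a this
  split_ifs with e1 e2 e2
  · exact absurd (e1.symm.trans e2) hlt.ne
  · subst e1; simpa using key _ _ hlt.ne
  · subst e2; rw [← degreeOf_neg, neg_sub]; simpa using key _ _ hlt.ne'
  · simp

lemma degreeOf_rename_perm {n : ℕ} (w : Equiv.Perm (Fin n)) (f : MvPolynomial (Fin n) ℝ)
    (i : Fin n) : (rename ⇑w f).degreeOf i = f.degreeOf (w.symm i) := by
  have := degreeOf_rename_of_injective (p := f) w.injective (w.symm i)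
  simpa using this

/-- Each `w(∏_{i<j} (a_i - t a_j))` has in every variable at most the degree of the Vandermonde
product, so dividing `∑_w sgn(w) w(p ∏_{i<j} (a_i - t a_j))` by the latter leaves at most the
degree contributed by `p`. -/
lemma degreeOf_le_of_mul_vand {n : ℕ} {t : ℝ} {h p : MvPolynomial (Fin n) ℝ}
    (hf : h * vand n = antisym (p * tvand n t)) {d : ℕ} (hp : ∀ i, p.degreeOf i ≤ d) (i : Fin n) :
    h.degreeOf i ≤ d := by
  by_cases h0 : h = 0
  · simp [h0]
  have hv : ∀ w : Equiv.Perm (Fin n), (vand n).degreeOf (w.symm i) = (vand n).degreeOf i := by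
    intro w
    rw [← degreeOf_rename_perm, rename_vand, smul_eq_C_mul, degreeOf_C_mul]
    exact mem_nonZeroDivisors_of_ne_zero (by simp)
  have h1 : (antisym (p * tvand n t)).degreeOf i ≤ d + (vand n).degreeOf i := by
    refine (degreeOf_sum_le _ _ _).trans (Finset.sup_le fun w _ => ?_)
    rw [smul_eq_C_mul]
    refine (degreeOf_C_mul_le _ _ _).trans ?_
    rw [degreeOf_rename_perm, ← hv w]
    exact (degreeOf_mul_le _ _ _).trans (add_le_add (hp _) (degreeOf_tvand_le _ _ _))
  rw [← hf, degreeOf_mul_eq h0 (vand_ne_zero n)] at h1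
  omega

/-- A quotient of homogeneous polynomials is homogeneous. -/
lemma isHomogeneous_of_mul {n : ℕ} {h v : MvPolynomial (Fin n) ℝ} {k m : ℕ} (hv0 : v ≠ 0)
    (hv : v.IsHomogeneous m) (hh : (h * v).IsHomogeneous (k + m)) : h.IsHomogeneous k := by
  let _ : GradedAlgebra (homogeneousSubmodule (Fin n) ℝ) := gradedAlgebra
  have h1 := DirectSum.coe_decompose_mul_add_of_right_mem (homogeneousSubmodule (Fin n) ℝ)
    (a := h) (i := k) ((mem_homogeneousSubmodule m v).2 hv)
  have h2 := DirectSum.decompose_of_mem_same (homogeneousSubmodule (Fin n) ℝ)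
    ((mem_homogeneousSubmodule _ _).2 hh)
  rw [h2] at h1
  rw [mul_right_cancel₀ hv0 h1]
  exact (DirectSum.decompose (homogeneousSubmodule (Fin n) ℝ) h k).2

lemma isHomogeneous_of_mul_vand {n : ℕ} {t : ℝ} {h p : MvPolynomial (Fin n) ℝ}
    (hf : h * vand n = antisym (p * tvand n t)) {k : ℕ} (hp : p.IsHomogeneous k) :
    h.IsHomogeneous k := by
  have hv : (vand n).IsHomogeneous
      (∑ p ∈ Finset.univ.filter (fun p : Fin n × Fin n => p.1 < p.2), 1) :=
    IsHomogeneous.prod _ _ _ fun p _ => (isHomogeneous_X _ _).sub (isHomogeneous_X _ _)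
  have ht : (tvand n t).IsHomogeneous
      (∑ p ∈ Finset.univ.filter (fun p : Fin n × Fin n => p.1 < p.2), 1) :=
    IsHomogeneous.prod _ _ _ fun p _ => (isHomogeneous_X _ _).sub (isHomogeneous_C_mul_X _ _)
  refine isHomogeneous_of_mul (vand_ne_zero n) hv ?_
  rw [hf]
  refine IsHomogeneous.sum _ _ _ fun w _ => ?_
  rw [smul_eq_C_mul]
  exact (hp.mul ht).rename_isHomogeneous.C_mul _

/-! ### A characterization of the elementary symmetric polynomials -/

/-- A symmetric homogeneous polynomial of degree `k`, of degree at most one in each variable, is a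
multiple of the elementary symmetric polynomial `e_k`. -/
lemma eq_smul_esymm {n k : ℕ} {h : MvPolynomial (Fin n) ℝ} (hs : h.IsSymmetric)
    (hh : h.IsHomogeneous k) (hd : ∀ i, h.degreeOf i ≤ 1) :
    ∃ c : ℝ, h = C c * esymm (Fin n) ℝ k := by
  -- `ind S` is the exponent vector of the squarefree monomial `∏_{i ∈ S} a_i`.
  let ind : Finset (Fin n) → (Fin n →₀ ℕ) := fun S => ∑ i ∈ S, Finsupp.single i 1
  have ind_apply : ∀ S i, ind S i = if i ∈ S then 1 else 0 := fun S i => by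
    simp [ind, Finsupp.finsetSum_apply, Finsupp.single_apply]
  have ind_inj : Function.Injective ind := fun S T hST => by
    ext i
    have := DFunLike.congr_fun hST i
    rw [ind_apply, ind_apply] at this
    by_cases h1 : i ∈ S <;> by_cases h2 : i ∈ T <;> simp_all
  have hsupp : ∀ d ∈ h.support, d = ind d.support ∧ d.support.card = k := by
    intro d hdm
    have e : d = ind d.support := by
      ext i
      have := (monomial_le_degreeOf i hdm).trans (hd i)
      rw [ind_apply]
      split_ifs with h1
      · have := Finsupp.mem_support_iff.1 h1; omega
      · simpa using h1
    refine ⟨e, ?_⟩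
    have h2 := hh.degree_eq_sum_deg_support hdm
    have h3 : ∑ i ∈ d.support, d i = ∑ i ∈ d.support, 1 := Finset.sum_congr rfl fun i hi => by
      conv_lhs => rw [e, ind_apply, if_pos hi]
    rw [h2, h3]; simp
  -- Symmetry makes the coefficients at all squarefree monomials of equal degree agree.
  have hconst : ∀ S T : Finset (Fin n), S.card = T.card → coeff (ind S) h = coeff (ind T) h := by
    intro S T hST
    let u := (Finset.equivOfCardEq hST).extendSubtype
    have hu : S.map u.toEmbedding = T := by
      refine Finset.eq_of_subset_of_card_le (fun x hx => ?_) (by simp [hST])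
      obtain ⟨y, hy, rfl⟩ := Finset.mem_map.1 hx
      exact (Finset.equivOfCardEq hST).extendSubtype_mem y hy
    have e : (ind S).mapDomain u = ind T := by
      rw [← hu]
      simp [ind, Finsupp.mapDomain_finsetSum, Finsupp.mapDomain_single]
    rw [← e, ← coeff_rename_mapDomain u u.injective h, hs u]
  have hes : ∀ d, coeff d (esymm (Fin n) ℝ k) =
      ∑ S ∈ Finset.powersetCard k Finset.univ, if ind S = d then 1 else 0 := fun d => by
    rw [esymm_eq_sum_monomial, coeff_sum]
    exact Finset.sum_congr rfl fun S _ => coeff_monomial _ _ _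
  by_cases h0 : h = 0
  · exact ⟨0, by simp [h0]⟩
  obtain ⟨d0, hd0⟩ := (support_nonempty).2 h0
  refine ⟨coeff d0 h, ?_⟩
  ext d
  rw [coeff_C_mul, hes]
  by_cases hex : ∃ S : Finset (Fin n), S.card = k ∧ ind S = d
  · obtain ⟨S, hS, rfl⟩ := hex
    rw [Finset.sum_eq_single S (fun T _ hT => if_neg fun h => hT (ind_inj h))
      (fun h => absurd (Finset.mem_powersetCard_univ.2 hS) h), if_pos rfl, mul_one,
      (hsupp d0 hd0).1]
    exact hconst _ _ (hS.trans (hsupp d0 hd0).2.symm)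
  · rw [Finset.sum_eq_zero fun T hT => if_neg fun h => hex ⟨T, Finset.mem_powersetCard_univ.1 hT, h⟩,
      mul_zero]
    by_contra hne
    have := hsupp d (mem_support_iff.2 hne)
    exact hex ⟨_, this.2, this.1.symm⟩

/-! ### The polynomial `a_1 e_{k-1}(a_2, …, a_n)` -/

/-- The sum of the squarefree monomials of degree `k` divisible by the first variable, that is
`a_1 e_{k-1}(a_2, …, a_n)`, and `0` for `k = 0`. -/
noncomputable def firstSum (n : ℕ) [NeZero n] (k : ℕ) : MvPolynomial (Fin n) ℝ :=
  ∑ A ∈ (Finset.powersetCard k Finset.univ).filter (fun A : Finset (Fin n) => 0 ∈ A), ∏ i ∈ A, X i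

lemma firstSum_zero (n : ℕ) [NeZero n] : firstSum n 0 = 0 := by
  rw [firstSum, Finset.powersetCard_zero]
  simp [Finset.filter_singleton]

lemma firstSum_succ (n : ℕ) [NeZero n] (k : ℕ) :
    firstSum n (k + 1) = X 0 * (esymm (Fin n) ℝ k - firstSum n k) := by
  have h : esymm (Fin n) ℝ k - firstSum n k =
      ∑ A ∈ (Finset.powersetCard k Finset.univ).filter (fun A : Finset (Fin n) => ¬ 0 ∈ A),
        ∏ i ∈ A, X i := by
    rw [esymm, ← Finset.sum_filter_add_sum_filter_not _ (fun A : Finset (Fin n) => 0 ∈ A),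
      firstSum]
    ring
  rw [h, firstSum, Finset.mul_sum]
  symm
  refine Finset.sum_bij' (fun A _ => insert 0 A) (fun A _ => A.erase 0) ?_ ?_ ?_ ?_ ?_
  · intro A hA
    simp only [Finset.mem_filter, Finset.mem_powersetCard_univ] at hA ⊢
    exact ⟨by rw [Finset.card_insert_of_notMem hA.2, hA.1], Finset.mem_insert_self _ _⟩
  · intro A hA
    simp only [Finset.mem_filter, Finset.mem_powersetCard_univ] at hA ⊢
    exact ⟨by rw [Finset.card_erase_of_mem hA.2, hA.1]; rfl, Finset.notMem_erase _ _⟩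
  · intro A hA
    exact Finset.erase_insert (Finset.mem_filter.1 hA).2
  · intro A hA
    exact Finset.insert_erase (Finset.mem_filter.1 hA).2
  · intro A hA
    exact (Finset.prod_insert (Finset.mem_filter.1 hA).2).symm

/-- The truncation of the expansion of `∏_i (a_1 - a_i) = 0`:
`∑_{j<k} (-1)^j e_j a_1^{k-j} = (-1)^{k-1} a_1 e_{k-1}(a_2, …, a_n)`. -/
lemma sum_esymm_mul_pow (n : ℕ) [NeZero n] (k : ℕ) :
    ∑ j ∈ Finset.range k, (-1) ^ j * esymm (Fin n) ℝ j * X 0 ^ (k - j) =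
      -(-1) ^ k * firstSum n k := by
  induction k with
  | zero => simp [firstSum_zero]
  | succ k ih =>
    have h : ∑ j ∈ Finset.range k, (-1) ^ j * esymm (Fin n) ℝ j * X 0 ^ (k + 1 - j) =
        X 0 * ∑ j ∈ Finset.range k, (-1) ^ j * esymm (Fin n) ℝ j * X 0 ^ (k - j) := by
      rw [Finset.mul_sum]
      refine Finset.sum_congr rfl fun j hj => ?_
      rw [Nat.succ_sub (Finset.mem_range.1 hj).le, pow_succ]
      ring
    rw [Finset.sum_range_succ, h, ih, firstSum_succ, Nat.add_sub_cancel_left]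
    ring

lemma degreeOf_firstSum_le (n : ℕ) [NeZero n] (k : ℕ) (i : Fin n) :
    (firstSum n k).degreeOf i ≤ 1 := by
  refine (degreeOf_sum_le _ _ _).trans (Finset.sup_le fun A _ => ?_)
  refine (degreeOf_prod_le _ _ _).trans ?_
  simp only [degreeOf_X, Finset.sum_ite_eq]
  split_ifs <;> simp

lemma isHomogeneous_firstSum (n : ℕ) [NeZero n] (k : ℕ) : (firstSum n k).IsHomogeneous k := by
  refine IsHomogeneous.sum _ _ _ fun A hA => ?_
  have := IsHomogeneous.prod A (fun i => (X i : MvPolynomial (Fin n) ℝ)) (fun _ => 1)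
    fun i _ => isHomogeneous_X _ _
  simpa [Finset.mem_powersetCard_univ.1 (Finset.mem_filter.1 hA).1] using this

/-- The first `k` indices form one of the summation indices in `firstSum n k`. -/
lemma exists_firstSum_index {n k : ℕ} [NeZero n] (hk : 1 ≤ k) (hkn : k ≤ n) :
    ∃ A ∈ (Finset.powersetCard k Finset.univ).filter (fun A : Finset (Fin n) => 0 ∈ A),
      ∀ i : Fin n, i ∈ A ↔ (i : ℕ) < k := by
  refine ⟨Finset.univ.filter (fun i : Fin n => (i : ℕ) < k), ?_, by simp⟩
  simp [Fin.card_filter_val_lt, hkn]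
  omega

/-! ### Nonvanishing of `∑_w sgn(w) w(a_1 e_{k-1}(a_2, …, a_n) ∏_{i<j} (a_i - t a_j))` -/

lemma perm_eq_one_of_monotone {n : ℕ} (w : Equiv.Perm (Fin n)) (hw : StrictMono w) : w = 1 := by
  have h : hw.orderIsoOfSurjective w w.surjective = OrderIso.refl _ := Subsingleton.elim _ _
  ext i
  exact congrArg Fin.val (DFunLike.congr_fun h i)

/-- At the point `(1, t, …, t^{n-1})` every term of
`∑_w sgn(w) w(a_1 e_{k-1}(a_2, …, a_n) ∏_{i<j} (a_i - t a_j))` other than `w = 1` vanishes. -/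
lemma antisym_firstSum_ne_zero_of_pos {n k : ℕ} [NeZero n] {t : ℝ} (ht0 : 0 < t) (ht1 : t < 1)
    (hk : 1 ≤ k) (hkn : k ≤ n) : antisym (firstSum n k * tvand n t) ≠ 0 := by
  intro h0
  have h1 := congrArg (eval (fun i : Fin n => t ^ (i : ℕ))) h0
  rw [antisym, map_sum, map_zero, Finset.sum_eq_single 1] at h1
  · simp only [Equiv.Perm.sign_one, Equiv.Perm.coe_one, rename_id, AlgHom.id_apply, smul_eval,
      map_mul] at h1
    have h2 : eval (fun i : Fin n => t ^ (i : ℕ)) (firstSum n k) ≠ 0 := by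
      obtain ⟨A, hA, -⟩ := exists_firstSum_index (n := n) hk hkn
      simp only [firstSum, map_sum, map_prod, eval_X]
      exact (Finset.sum_pos (fun B _ => Finset.prod_pos fun i _ => pow_pos ht0 _) ⟨A, hA⟩).ne'
    have h3 : eval (fun i : Fin n => t ^ (i : ℕ)) (tvand n t) ≠ 0 := by
      simp only [tvand, map_prod, map_sub, map_mul, eval_X, eval_C]
      refine Finset.prod_ne_zero_iff.2 fun p hp => ?_
      have hlt : (p.1 : ℕ) < p.2 := (Finset.mem_filter.1 hp).2
      rw [← pow_succ', sub_ne_zero]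
      exact (pow_lt_pow_right_of_lt_one₀ ht0 ht1 (by omega)).ne'
    simp [h2, h3] at h1
  · intro w _ hw
    obtain ⟨m, rfl⟩ := Nat.exists_eq_succ_of_ne_zero (NeZero.ne n)
    -- `w ≠ 1` places some `i + 1` before `i`, and then
    -- `∏_{i<j} (a_i - t a_j)` acquires the factor `t^{i+1} - t · t^i`.
    have hex : ∃ i : Fin m, w.symm i.succ < w.symm i.castSucc := by
      by_contra hno
      push Not at hno
      have hmono : StrictMono w.symm := Fin.strictMono_iff_lt_succ.2 fun i =>
        lt_of_le_of_ne (hno i) fun h => (Fin.castSucc_lt_succ (i := i)).ne (w.symm.injective h)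
      have := perm_eq_one_of_monotone _ hmono
      exact hw (by rw [← Equiv.symm_symm w, this]; rfl)
    obtain ⟨i, hi⟩ := hex
    rw [smul_eval, eval_rename, map_mul]
    have : eval ((fun i : Fin (m + 1) => t ^ (i : ℕ)) ∘ w) (tvand (m + 1) t) = 0 := by
      simp only [tvand, map_prod, map_sub, map_mul, eval_X, eval_C]
      refine Finset.prod_eq_zero (i := (w.symm i.succ, w.symm i.castSucc)) (by simpa using hi) ?_
      simp [pow_succ']
    rw [this]; simp
  · simp

lemma tvand_zero (n : ℕ) : tvand n 0 = monomial (Finsupp.equivFunOnFinite.symm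
    (fun i : Fin n => n - 1 - (i : ℕ))) 1 := by
  rw [tvand, Finset.prod_filter, Fintype.prod_prod_type, monomial_eq, C_1, one_mul,
    Finsupp.prod_fintype _ _ (by simp)]
  refine Finset.prod_congr rfl fun i _ => ?_
  rw [← Finset.prod_filter]
  simp only [map_zero, zero_mul, sub_zero, Finset.prod_const, Finsupp.equivFunOnFinite_symm_apply_apply]
  congr 1
  rw [Finset.filter_lt_eq_Ioi, Fin.card_Ioi]

/-- For `t = 0` the sum expands into signed monomials, and the one whose exponents are
`(n-1, …, 1, 0)` plus `1` in the first `k` places arises for `w = 1` only. -/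
lemma antisym_firstSum_ne_zero_of_eq_zero {n k : ℕ} [NeZero n] (hk : 1 ≤ k) (hkn : k ≤ n) :
    antisym (firstSum n k * tvand n 0) ≠ 0 := by
  intro h0
  let δ : Fin n →₀ ℕ := Finsupp.equivFunOnFinite.symm (fun i : Fin n => n - 1 - (i : ℕ))
  let ind : Finset (Fin n) → (Fin n →₀ ℕ) := fun S => ∑ i ∈ S, Finsupp.single i 1
  have ind_apply : ∀ S i, ind S i = if i ∈ S then 1 else 0 := fun S i => by
    simp [ind, Finsupp.finsetSum_apply, Finsupp.single_apply]
  have δ_apply : ∀ i, δ i = n - 1 - (i : ℕ) := fun i => rfl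
  obtain ⟨A, hA, hA'⟩ := exists_firstSum_index (n := n) hk hkn
  -- Both exponent vectors are weakly decreasing and the target `ind A + δ` is strictly decreasing,
  -- which forces `w` to preserve the order.
  have hkey : ∀ (w : Equiv.Perm (Fin n)) (S : Finset (Fin n)),
      (ind S + δ).mapDomain w = ind A + δ → w = 1 := by
    intro w S h
    refine perm_eq_one_of_monotone w (Monotone.strictMono_of_injective ?_ w.injective)
    intro i j hij
    by_contra! hlt
    have hi := DFunLike.congr_fun h (w i)
    have hj := DFunLike.congr_fun h (w j)
    rw [Finsupp.mapDomain_apply w.injective, Finsupp.add_apply, Finsupp.add_apply, ind_apply,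
      ind_apply, δ_apply, δ_apply] at hi hj
    simp only [hA'] at hi hj
    have hne : i ≠ j := fun e => by subst e; exact lt_irrefl _ hlt
    have hij' : (i : ℕ) < j := lt_of_le_of_ne hij (fun e => hne (Fin.ext e))
    have hlt' : (w j : ℕ) < w i := hlt
    have := (w i).2
    have := j.2
    split_ifs at hi hj <;> omega
  have h1 := congrArg (coeff (ind A + δ)) h0
  have hprod : firstSum n k * tvand n 0 =
      ∑ S ∈ (Finset.powersetCard k Finset.univ).filter (fun A : Finset (Fin n) => 0 ∈ A),
        monomial (ind S + δ) 1 := by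
    rw [tvand_zero, firstSum, Finset.sum_mul]
    refine Finset.sum_congr rfl fun S _ => ?_
    have : ∏ i ∈ S, (X i : MvPolynomial (Fin n) ℝ) = monomial (ind S) 1 := by
      simp only [ind, monomial_sum_one]; rfl
    rw [this, monomial_mul, one_mul]
  rw [antisym, coeff_sum, Finset.sum_eq_single 1, hprod] at h1
  · simp only [Equiv.Perm.sign_one, Equiv.Perm.coe_one, rename_id, AlgHom.id_apply, coeff_smul,
      coeff_sum, coeff_monomial, coeff_zero] at h1
    have : (0 : ℝ) < ∑ S ∈ (Finset.powersetCard k Finset.univ).filter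
        (fun A : Finset (Fin n) => 0 ∈ A), if ind S + δ = ind A + δ then (1 : ℝ) else 0 :=
      Finset.sum_pos' (fun S _ => by split_ifs <;> simp) ⟨A, hA, by simp⟩
    simp [-Finset.sum_boole] at h1 this
    exact this.ne' h1
  · intro w _ hw
    rw [hprod, coeff_smul, map_sum, coeff_sum, Finset.sum_eq_zero, smul_zero]
    intro S _
    rw [rename_monomial, coeff_monomial, if_neg fun h => hw (hkey w S h)]
  · simp

lemma antisym_firstSum_ne_zero {n k : ℕ} [NeZero n] {t : ℝ} (ht0 : 0 ≤ t) (ht1 : t < 1)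
    (hk : 1 ≤ k) (hkn : k ≤ n) : antisym (firstSum n k * tvand n t) ≠ 0 := by
  rcases ht0.eq_or_lt with rfl | h
  · exact antisym_firstSum_ne_zero_of_eq_zero hk hkn
  · exact antisym_firstSum_ne_zero_of_pos h ht1 hk hkn

/-! ### The recurrence and its consequences -/

lemma hlNumerator_oneRow (n : ℕ) [NeZero n] (t : ℝ) (k : ℕ) :
    hlNumerator n t (oneRow n k) = antisym (X 0 ^ k * tvand n t) := by
  have : ∏ i : Fin n, (X i : MvPolynomial (Fin n) ℝ) ^ oneRow n k i = X 0 ^ k := by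
    rw [Finset.prod_eq_single 0 (fun i _ hi => ?_) (by simp)]
    · simp [oneRow]
    · have : (i : ℕ) ≠ 0 := fun h => hi (Fin.ext h)
      simp [oneRow, this]
  rw [hlNumerator, this, antisym]

lemma vlam_ne_zero (n : ℕ) {t : ℝ} (ht0 : 0 ≤ t) (ht1 : t < 1) (lam : Fin n → ℕ) :
    vlam n t lam ≠ 0 := by
  refine Finset.prod_ne_zero_iff.2 fun k _ => Finset.prod_ne_zero_iff.2 fun i _ => ?_
  exact div_ne_zero (sub_pos.2 (pow_lt_one₀ ht0 ht1 (by omega))).ne' (sub_pos.2 ht1).ne'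

/-- The multiple `G_k = v_{(k)}(t) g_k / (1 - t)` of `g_k`, normalized so that
`G_k ∏_{i<j} (a_i - a_j) = ∑_w sgn(w) w(a_1^k ∏_{i<j} (a_i - t a_j))`. -/
lemma IsG.exists_normalization {n k : ℕ} [NeZero n] {t : ℝ} (ht0 : 0 ≤ t) (ht1 : t < 1)
    {g : MvPolynomial (Fin n) ℝ} (hg : IsG n t k g) :
    ∃ c : ℝ, c ≠ 0 ∧ C c * g * vand n = antisym (X 0 ^ k * tvand n t) := by
  have h1 : (1 - t) ≠ 0 := (sub_pos.2 ht1).ne'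
  refine ⟨(1 - t)⁻¹ * vlam n t (oneRow n k), mul_ne_zero (inv_ne_zero h1)
    (vlam_ne_zero n ht0 ht1 _), ?_⟩
  rw [IsG, hlNumerator_oneRow] at hg
  rw [C_mul, mul_assoc, mul_assoc, ← mul_assoc _ g, hg, ← mul_assoc, ← C_mul, inv_mul_cancel₀ h1,
    C_1, one_mul]

/-- The analogue of Newton's identities: `∑_{j<k} (-1)^j e_j G_{k-j}` is a nonzero multiple of
`e_k`, for `1 ≤ k ≤ n`. -/
lemma exists_recurrence {n k : ℕ} [NeZero n] {t : ℝ} (ht0 : 0 ≤ t) (ht1 : t < 1)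
    (hk : 1 ≤ k) (hkn : k ≤ n) {G : ℕ → MvPolynomial (Fin n) ℝ}
    (hG : ∀ k, 1 ≤ k → k ≤ n → G k * vand n = antisym (X 0 ^ k * tvand n t)) :
    ∃ c : ℝ, c ≠ 0 ∧ ∑ j ∈ Finset.range k, (-1) ^ j * esymm (Fin n) ℝ j * G (k - j) =
      C c * esymm (Fin n) ℝ k := by
  set h := ∑ j ∈ Finset.range k, (-1) ^ j * esymm (Fin n) ℝ j * G (k - j)
  have hA : h * vand n = antisym ((-(-1) ^ k * firstSum n k) * tvand n t) := by
    rw [← sum_esymm_mul_pow, Finset.sum_mul, Finset.sum_mul, antisym_sum]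
    refine Finset.sum_congr rfl fun j hj => ?_
    have hj' := Finset.mem_range.1 hj
    have hs : ((-1) ^ j * esymm (Fin n) ℝ j).IsSymmetric := by
      have := (IsSymmetric.C (σ := Fin n) ((-1 : ℝ) ^ j)).mul (esymm_isSymmetric (Fin n) ℝ j)
      simpa using this
    rw [mul_assoc, hG _ (by omega) (by omega), mul_assoc _ (X 0 ^ _), antisym_mul hs]
  have hsign : (-(-1) ^ k : MvPolynomial (Fin n) ℝ) = C (-(-1) ^ k) := by simp
  rw [hsign] at hA
  have hp1 : (C (-(-1) ^ k) * firstSum n k).IsHomogeneous k := (isHomogeneous_firstSum n k).C_mul _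
  obtain ⟨c, hc⟩ := eq_smul_esymm (isSymmetric_of_mul_vand hA) (isHomogeneous_of_mul_vand hA hp1)
    (degreeOf_le_of_mul_vand hA fun i =>
      (degreeOf_C_mul_le _ _ _).trans (degreeOf_firstSum_le n k i))
  refine ⟨c, ?_, hc⟩
  rintro rfl
  rw [hc, C_0, zero_mul, zero_mul, mul_assoc, antisym_mul (IsSymmetric.C _)] at hA
  exact mul_ne_zero (by simp) (antisym_firstSum_ne_zero ht0 ht1 hk hkn) hA.symm

/-- Solving the recurrence for `e_k` puts `e_1, …, e_n` in every algebra containing `G_1, …, G_n`. -/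
lemma esymm_mem {n : ℕ} [NeZero n] {t : ℝ} (ht0 : 0 ≤ t) (ht1 : t < 1)
    {G : ℕ → MvPolynomial (Fin n) ℝ}
    (hG : ∀ k, 1 ≤ k → k ≤ n → G k * vand n = antisym (X 0 ^ k * tvand n t))
    (S : Subalgebra ℝ (MvPolynomial (Fin n) ℝ)) (hS : ∀ k, 1 ≤ k → k ≤ n → G k ∈ S) :
    ∀ k ≤ n, esymm (Fin n) ℝ k ∈ S := by
  intro k
  induction k using Nat.strong_induction_on with
  | _ k ih =>
    intro hkn
    rcases Nat.eq_zero_or_pos k with rfl | hk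
    · rw [esymm_zero]; exact S.one_mem
    obtain ⟨c, hc0, hc⟩ := exists_recurrence ht0 ht1 hk hkn hG
    have hmem : C c * esymm (Fin n) ℝ k ∈ S := by
      rw [← hc]
      refine S.sum_mem fun j hj => ?_
      have hj' := Finset.mem_range.1 hj
      exact S.mul_mem (S.mul_mem (S.pow_mem (S.neg_mem S.one_mem) _) (ih j hj' (by omega)))
        (hS _ (by omega) (by omega))
    rw [← smul_eq_C_mul] at hmem
    simpa [smul_smul, inv_mul_cancel₀ hc0] using S.smul_mem hmem c⁻¹

/-- A surjective endomorphism of a Noetherian ring is injective, because the kernels of its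
iterates form an ascending chain of ideals. -/
lemma RingHom.injective_of_surjective_of_noetherian {R : Type*} [CommRing R] [IsNoetherianRing R]
    (f : R →+* R) (hf : Function.Surjective f) : Function.Injective f := by
  have hcomm : ∀ (m : ℕ) (x : R), (f ^ (m + 1)) x = f ((f ^ m) x) := fun m x => by
    rw [pow_succ']; rfl
  let I : ℕ →o Submodule R R := ⟨fun m => RingHom.ker (f ^ m), monotone_nat_of_le_succ
    fun m x hx => by
      rw [RingHom.mem_ker] at hx ⊢
      rw [hcomm, hx, map_zero]⟩
  obtain ⟨m, hm⟩ := monotone_stabilizes_iff_noetherian.2 ‹IsNoetherianRing R› I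
  rw [injective_iff_map_eq_zero]
  intro x hx
  obtain ⟨y, rfl⟩ : ∃ y, (f ^ m) y = x := by
    have := hf.iterate m x
    rwa [← RingHom.coe_pow] at this
  have hy : y ∈ I (m + 1) := (hcomm m y).trans hx
  rw [← hm (m + 1) (Nat.le_succ m)] at hy
  exact hy

/-- `n` generators of the algebra of symmetric polynomials in `n` variables are algebraically
independent: that algebra is itself a polynomial ring in `n` variables, so `aeval g` gives
a surjective endomorphism of a Noetherian ring. -/
lemma algebraicIndependent_of_adjoin_eq {n : ℕ} {g : Fin n → MvPolynomial (Fin n) ℝ}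
    (hg : Algebra.adjoin ℝ (Set.range g) = symmetricSubalgebra (Fin n) ℝ) :
    AlgebraicIndependent ℝ g := by
  have hr : (aeval g : MvPolynomial (Fin n) ℝ →ₐ[ℝ] _).range = symmetricSubalgebra (Fin n) ℝ := by
    rw [← hg, Algebra.adjoin_range_eq_range_aeval]
  let φ : MvPolynomial (Fin n) ℝ →ₐ[ℝ] symmetricSubalgebra (Fin n) ℝ :=
    (aeval g).codRestrict _ fun p => hr ▸ AlgHom.mem_range_self _ p
  have hφ : Function.Surjective φ := by
    rintro ⟨f, hf⟩
    rw [← hr] at hf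
    obtain ⟨p, hp⟩ := hf
    exact ⟨p, Subtype.ext hp⟩
  let e := (esymmAlgEquiv (Fin n) ℝ (Fintype.card_fin n)).symm
  have hinj : Function.Injective (e.toAlgHom.comp φ) :=
    RingHom.injective_of_surjective_of_noetherian (e.toAlgHom.comp φ).toRingHom
      (e.surjective.comp hφ)
  intro p q hpq
  exact hinj (congrArg e (Subtype.ext hpq))

/-- For `n ≥ 1` and `0 ≤ t < 1`, the polynomials
`g_1, …, g_n` are algebraically independent over `ℝ` and generate the algebra of
symmetric polynomials: `Λ_n = ℝ[g_1, …, g_n]`. -/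
theorem g_algebraicallyIndependent_and_generate (n : ℕ) (hn : 1 ≤ n)
    (t : ℝ) (ht0 : 0 ≤ t) (ht1 : t < 1)
    (g : Fin n → MvPolynomial (Fin n) ℝ) (hg : ∀ k : Fin n, IsG n t ((k : ℕ) + 1) (g k)) :
    AlgebraicIndependent ℝ g ∧
      ∀ f : MvPolynomial (Fin n) ℝ, f.IsSymmetric ↔ f ∈ Algebra.adjoin ℝ (Set.range g) := by
  
  have : NeZero n := ⟨by omega⟩
  choose c hc0 hc using fun k => (hg k).exists_normalization ht0 ht1
  -- `G` reindexes the normalized `g_k` by `k = 1, …, n`; outside this range it is junk.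
  let G : ℕ → MvPolynomial (Fin n) ℝ := fun k =>
    if h : k - 1 < n then C (c ⟨k - 1, h⟩) * g ⟨k - 1, h⟩ else 0
  have hG : ∀ k, 1 ≤ k → k ≤ n → G k * vand n = antisym (X 0 ^ k * tvand n t) := by
    intro k hk hkn
    have h : k - 1 < n := by omega
    have := hc ⟨k - 1, h⟩
    rw [Nat.sub_add_cancel hk] at this
    simpa only [G, dif_pos h] using this
  have hadj : Algebra.adjoin ℝ (Set.range g) = symmetricSubalgebra (Fin n) ℝ := by
    apply le_antisymm
    · refine Algebra.adjoin_le ?_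
      rintro _ ⟨k, rfl⟩
      have h := ((mem_symmetricSubalgebra _).2 (isSymmetric_of_mul_vand (hc k)))
      rw [← smul_eq_C_mul] at h
      simpa [smul_smul, inv_mul_cancel₀ (hc0 k)] using
        (symmetricSubalgebra (Fin n) ℝ).smul_mem h (c k)⁻¹
    · have he := esymm_mem ht0 ht1 hG (Algebra.adjoin ℝ (Set.range g)) fun k hk hkn => by
        have h : k - 1 < n := by omega
        simp only [G, dif_pos h, ← smul_eq_C_mul]
        exact Subalgebra.smul_mem _ (Algebra.subset_adjoin (Set.mem_range_self _)) _
      intro f hf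
      obtain ⟨p, hp⟩ := esymmAlgHom_surjective ℝ (σ := Fin n) (n := n) 
        (Fintype.card_fin n).le ⟨f, hf⟩
      have hp' := congrArg Subtype.val hp
      rw [esymmAlgHom_apply] at hp'
      rw [← show _ = f from hp']
      have hmem := AlgHom.mem_range_self (aeval fun i : Fin n => esymm (Fin n) ℝ (i + 1)) p
      rw [aeval_range] at hmem
      refine Algebra.adjoin_le ?_ hmem
      rintro _ ⟨i, rfl⟩
      exact he _ i.2
  refine ⟨algebraicIndependent_of_adjoin_eq hadj, fun f => ?_⟩
  rw [hadj, mem_symmetricSubalgebra]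
end

section
/- Fix real numbers t, α, a_1, …, a_n with 0 ≤ t < 1 and 0 ≤ α a_i ≤ 1 for every i (and tα a_i ≠ 1). Then the matrix of T(α) with respect to the basis {𝟙,𝟚}^{⊗n} of V^{⊗n} is stochastic: for every basis vector v, the coefficients of T(α)(v) in this basis are nonnegative and sum to 1. -/
/-!
Reading the sites from left to right, `R(a, t)` is the transition kernel of a Markov chain: given
the incoming pair `(h, v)`, its weights over outgoing pairs `(h', v')` are nonnegative
(`RwReal_nonneg`) and sum to one (`RwReal_sum`). Nonnegativity of the entries of `T(α)` is then
immediate. For the column sums, summing over the outgoing vertical letters `e'` factorizes over the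
sites and leaves a stochastic matrix at each site acting on the horizontal letter alone; the total
mass of all paths of an inhomogeneous Markov chain with fixed initial state is one
(`markov_path_sum`).
-/

/-- Matrix coefficients of the stochastic six-vertex `R`-matrix `R(a, t)` with real
parameters.  The basis of `V` is encoded by `Fin 2` with `0 = 𝟙`, `1 = 𝟚`;
`RwReal t a h v h' v'` is the coefficient of `h' ⊗ v'` in `R(a, t)(h ⊗ v)`. -/
noncomputable def RwReal (t a : ℝ) : Fin 2 → Fin 2 → Fin 2 → Fin 2 → ℝ
  | 0, 0, 0, 0 => 1
  | 1, 0, 1, 0 => (1 - a) / (1 - t * a)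
  | 1, 0, 0, 1 => (1 - t) * a / (1 - t * a)
  | 0, 1, 1, 0 => (1 - t) / (1 - t * a)
  | 0, 1, 0, 1 => t * (1 - a) / (1 - t * a)
  | 1, 1, 1, 1 => 1
  | _, _, _, _ => 0

/-- The transfer operator `T(α) = T(α, t; a_1, …, a_n)` of the inhomogeneous six-vertex
model (site `i` carrying spectral parameter `α·a_i`), with left boundary `𝟙` and free right
boundary:  `T(α)_{e',e} = Σ_{h : h_0 = 𝟙} ∏_i RwReal(t, α a_i; h_{i-1}, e_i; h_i, e'_i)`. -/
noncomputable def TmatReal (n : ℕ) (t α : ℝ) (a : Fin n → ℝ) :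
    Matrix (Fin n → Fin 2) (Fin n → Fin 2) ℝ :=
  Matrix.of fun e' e =>
    ∑ h : Fin (n + 1) → Fin 2,
      (if h 0 = 0 then 1 else 0) *
        ∏ i : Fin n, RwReal t (α * a i) (h i.castSucc) (e i) (h i.succ) (e' i)

theorem RwReal_denom_pos {t b : ℝ} (ht0 : 0 ≤ t) (ht1 : t < 1) (hb1 : b ≤ 1) :
    0 < 1 - t * b := by
  nlinarith [mul_le_mul_of_nonneg_left hb1 ht0]

theorem RwReal_nonneg {t b : ℝ} (ht0 : 0 ≤ t) (ht1 : t < 1) (hb0 : 0 ≤ b) (hb1 : b ≤ 1)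
    (h v h' v' : Fin 2) : 0 ≤ RwReal t b h v h' v' := by
  have hd := (RwReal_denom_pos ht0 ht1 hb1).le
  have h1 : 0 ≤ 1 - t := by linarith
  have h2 : 0 ≤ 1 - b := by linarith
  fin_cases h <;> fin_cases v <;> fin_cases h' <;> fin_cases v' <;> simp [RwReal] <;> positivity

theorem RwReal_sum {t b : ℝ} (hd : 1 - t * b ≠ 0) (h v : Fin 2) :
    ∑ h' : Fin 2, ∑ v' : Fin 2, RwReal t b h v h' v' = 1 := by
  fin_cases h <;> fin_cases v <;> simp [Fin.sum_univ_two, RwReal] <;> field_simp <;> ring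

/-- The paths of length `n` of an inhomogeneous Markov chain, with step-`i` kernel `Q i` and
started at `x`, have total weight one. -/
theorem markov_path_sum {S : Type*} [Fintype S] [DecidableEq S] (n : ℕ) (Q : Fin n → S → S → ℝ)
    (hQ : ∀ i x, ∑ y, Q i x y = 1) (x : S) :
    ∑ h : Fin (n + 1) → S,
      (if h 0 = x then 1 else 0) * ∏ i : Fin n, Q i (h i.castSucc) (h i.succ) = 1 := by
  induction n generalizing x with
  | zero =>
    rw [← (Equiv.funUnique (Fin 1) S).symm.sum_comp]
    simp
  | succ n ih =>
    -- Split off the initial state of the path.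
    rw [← (Fin.consEquiv (fun _ : Fin (n + 2) => S)).sum_comp, Fintype.sum_prod_type]
    simp only [Fin.consEquiv_apply, Fin.cons_zero, Fin.cons_succ, Fin.prod_univ_succ,
      Fin.castSucc_zero, ← Fin.succ_castSucc, ite_mul, one_mul, zero_mul]
    rw [Finset.sum_comm]
    simp only [Finset.sum_ite_eq', Finset.mem_univ, if_true]
    calc
      _ = ∑ h : Fin (n + 1) → S, ∑ y, Q 0 x y * ((if h 0 = y then 1 else 0) *
            ∏ i : Fin n, Q i.succ (h i.castSucc) (h i.succ)) := by
          refine Finset.sum_congr rfl fun h _ => ?_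
          simp
      _ = ∑ y, Q 0 x y := by
          rw [Finset.sum_comm]
          refine Finset.sum_congr rfl fun y _ => ?_
          rw [← Finset.mul_sum, ih (fun i => Q i.succ) (fun i => hQ i.succ) y, mul_one]
      _ = 1 := hQ 0 x

/-- For `0 ≤ t < 1` and `0 ≤ α a_i ≤ 1` (with `t α a_i ≠ 1`), the matrix
of `T(α)` in the basis `{𝟙,𝟚}^{⊗n}` is stochastic: its entries are nonnegative and each
column (the image of a basis vector) sums to `1`. -/
theorem transfer_matrix_stochastic (n : ℕ) (t α : ℝ) (a : Fin n → ℝ)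
    (ht0 : 0 ≤ t) (ht1 : t < 1)
    (ha : ∀ i, 0 ≤ α * a i ∧ α * a i ≤ 1) (ha' : ∀ i, t * (α * a i) ≠ 1) :
    ∀ e : Fin n → Fin 2,
      (∀ e' : Fin n → Fin 2, 0 ≤ TmatReal n t α a e' e) ∧
      ∑ e' : Fin n → Fin 2, TmatReal n t α a e' e = 1 := by
  intro e
  constructor
  · intro e'
    simp only [TmatReal, Matrix.of_apply]
    refine Finset.sum_nonneg fun h _ => mul_nonneg (by split_ifs <;> norm_num) ?_
    exact Finset.prod_nonneg fun i _ => RwReal_nonneg ht0 ht1 (ha i).1 (ha i).2 _ _ _ _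
  · simp only [TmatReal, Matrix.of_apply]
    rw [Finset.sum_comm]
    -- The sum over the outgoing vertical letters factorizes over the sites.
    have hfac : ∀ h : Fin (n + 1) → Fin 2,
        ∑ e' : Fin n → Fin 2,
          ∏ i : Fin n, RwReal t (α * a i) (h i.castSucc) (e i) (h i.succ) (e' i) =
        ∏ i : Fin n, ∑ v' : Fin 2, RwReal t (α * a i) (h i.castSucc) (e i) (h i.succ) v' :=
      fun h => (Fintype.prod_sum _).symm
    simp only [← Finset.mul_sum, hfac]
    exact markov_path_sum n (fun i x y => ∑ v' : Fin 2, RwReal t (α * a i) x (e i) y v')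
      (fun i x => RwReal_sum (RwReal_denom_pos ht0 ht1 (ha i).2).ne' x (e i)) 0
end
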